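/- arXiv:2602.19210 — 3 statements merged into one kernel-verified Lean document; each statement's English description precedes it below -/
import Mathlib

section
/- Let Â : [0,T] → ℝ^{d×d}, B̂ : [0,T] → ℝ^{d×κ}, R̂ : [0,T] → ℝ^{κ×κ} and Q̂ : [0,T] → ℝ^{d×d} be continuous, suppose R̂_t − c·Id ⪰ 0 for every t for some c > 0, Q̂_t ⪰ 0 for every t, and let G ∈ ℝ^{d×d} with G ⪰ 0. Then the terminal-value matrix Riccati equation dP_t/dt = −(P_t Â_t + Â_tᵀ P_t − P_t B̂_t R̂_t⁻¹ B̂_tᵀ P_t + Q̂_t), P_T = G, has exactly one continuously differentiable solution P : [0,T] → ℝ^{d×d} on all of [0,T], and moreover P_t ⪰ 0 for every t ∈ [0,T]. -/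
open MeasureTheory Matrix Set

noncomputable section

abbrev Mat (d : ℕ) := Matrix (Fin d) (Fin d) ℝ

attribute [local instance] Matrix.normedAddCommGroup Matrix.normedSpace

open scoped NNReal Topology

section ODE

variable {E : Type*} [NormedAddCommGroup E] [NormedSpace ℝ E]

/-- The radial retraction onto the closed ball of radius `R`. -/
def radialRetraction (R : ℝ) (x : E) : E := (R / max R ‖x‖) • x

lemma radialRetraction_of_norm_le {R : ℝ} (hR : 0 < R) {x : E} (hx : ‖x‖ ≤ R) :
    radialRetraction R x = x := by
  rw [radialRetraction, max_eq_left hx, div_self hR.ne', one_smul]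

lemma norm_radialRetraction {R : ℝ} (hR : 0 < R) (x : E) :
    ‖radialRetraction R x‖ = R / max R ‖x‖ * ‖x‖ := by
  rw [radialRetraction, norm_smul, Real.norm_of_nonneg (by positivity)]

lemma norm_radialRetraction_le_norm {R : ℝ} (hR : 0 < R) (x : E) :
    ‖radialRetraction R x‖ ≤ ‖x‖ := by
  rw [norm_radialRetraction hR]
  exact mul_le_of_le_one_left (norm_nonneg x)
    (div_le_one_of_le₀ (le_max_left _ _) (by positivity))

lemma norm_radialRetraction_le {R : ℝ} (hR : 0 < R) (x : E) :
    ‖radialRetraction R x‖ ≤ R := by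
  rw [norm_radialRetraction hR, div_mul_eq_mul_div, div_le_iff₀ (by positivity)]
  gcongr
  exact le_max_right _ _

lemma lipschitzWith_radialRetraction {R : ℝ} (hR : 0 < R) :
    LipschitzWith 2 (radialRetraction R : E → E) := by
  refine LipschitzWith.of_dist_le_mul fun x y => ?_
  rw [dist_eq_norm, dist_eq_norm]
  set a := max R ‖x‖ with ha
  set b := max R ‖y‖ with hb
  have ha0 : 0 < a := lt_max_of_lt_left hR
  have hb0 : 0 < b := lt_max_of_lt_left hR
  have hab : |b - a| ≤ ‖x - y‖ := by
    rw [abs_sub_comm]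
    refine (abs_max_sub_max_le_max R ‖x‖ R ‖y‖).trans ?_
    simpa using abs_norm_sub_norm_le x y
  have hsplit : radialRetraction R x - radialRetraction R y
      = (R / a) • (x - y) + (R / a * ((b - a) / b)) • y := by
    have : R / a * ((b - a) / b) = R / a - R / b := by field_simp
    rw [this, radialRetraction, radialRetraction, ← ha, ← hb, smul_sub, sub_smul]
    abel
  have hRa : R / a ≤ 1 := div_le_one_of_le₀ (le_max_left _ _) ha0.le
  have hyb : ‖y‖ / b ≤ 1 := div_le_one_of_le₀ (le_max_right _ _) hb0.le
  have hRa0 : 0 ≤ R / a := by positivity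
  have hyb0 : 0 ≤ ‖y‖ / b := by positivity
  calc ‖radialRetraction R x - radialRetraction R y‖
      ≤ R / a * ‖x - y‖ + R / a * (|b - a| * (‖y‖ / b)) := by
        rw [hsplit]
        refine (norm_add_le _ _).trans (le_of_eq ?_)
        rw [norm_smul, norm_smul, norm_mul, norm_div (b - a), Real.norm_of_nonneg hRa0,
          Real.norm_of_nonneg hb0.le, Real.norm_eq_abs]
        ring
    _ ≤ 1 * ‖x - y‖ + 1 * (‖x - y‖ * 1) := by gcongr
    _ = (2 : ℝ≥0) * ‖x - y‖ := by push_cast; ring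

lemma HasDerivWithinAt.Icc_to_Ici {f : ℝ → E} {f' : E} {a b t : ℝ}
    (h : HasDerivWithinAt f f' (Icc a b) t) (ht : t ∈ Ico a b) :
    HasDerivWithinAt f f' (Ici t) t :=
  h.mono_of_mem_nhdsWithin (Icc_mem_nhdsGE_of_mem ht)

lemma HasDerivWithinAt.reflect_Icc {f : ℝ → E} {f' : E} {a t : ℝ}
    (h : HasDerivWithinAt f f' (Icc 0 a) (a - t)) :
    HasDerivWithinAt (fun s => f (a - s)) (-f') (Icc 0 a) t := by
  have := HasDerivWithinAt.scomp (h := fun s : ℝ => a - s) (h' := -1) (s := Icc 0 a) t h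
    ((hasDerivWithinAt_id t _).const_sub a)
    (fun s hs => ⟨by linarith [hs.2], by linarith [hs.1]⟩)
  simpa [Function.comp_def] using this

lemma reflect_mem_Icc {a t : ℝ} (ht : t ∈ Icc 0 a) : a - t ∈ Icc 0 a :=
  ⟨by linarith [ht.2], by linarith [ht.1]⟩

/-- A curve whose derivative is dominated by a multiple of its norm and which vanishes at the
right endpoint vanishes identically. -/
lemma eq_zero_of_norm_deriv_le_of_eq_zero_right_endpoint {f f' : ℝ → E} {K T : ℝ}
    (hf : ∀ t ∈ Icc 0 T, HasDerivWithinAt f (f' t) (Icc 0 T) t)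
    (hT : f T = 0) (bound : ∀ t ∈ Icc 0 T, ‖f' t‖ ≤ K * ‖f t‖) :
    ∀ t ∈ Icc 0 T, f t = 0 := by
  have hg : ∀ t ∈ Icc 0 T,
      HasDerivWithinAt (fun s => f (T - s)) (-f' (T - t)) (Icc 0 T) t :=
    fun t ht => (hf _ (reflect_mem_Icc ht)).reflect_Icc
  intro t ht
  have := eq_zero_of_abs_deriv_le_mul_abs_self_of_eq_zero_right (K := K)
    (fun s hs => (hg s hs).continuousWithinAt)
    (fun s hs => (hg s (Ico_subset_Icc_self hs)).Icc_to_Ici hs) (by simpa using hT)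
    (fun s hs => by
      rw [norm_neg]
      exact bound _ (reflect_mem_Icc (Ico_subset_Icc_self hs))) (T - t) (reflect_mem_Icc ht)
  simpa using this

/-- Global existence for an ordinary differential equation with globally Lipschitz right-hand
side. -/
theorem exists_forall_mem_Icc_hasDerivWithinAt_of_lipschitzWith [CompleteSpace E]
    {f : ℝ → E → E} {T : ℝ} (hT : 0 ≤ T) {K : ℝ≥0}
    (hlip : ∀ t ∈ Icc 0 T, LipschitzWith K (f t))
    (hcont : ∀ x, ContinuousOn (f · x) (Icc 0 T)) (x₀ : E) :
    ∃ α : ℝ → E, α 0 = x₀ ∧ ∀ t ∈ Icc 0 T, HasDerivWithinAt α (f t (α t)) (Icc 0 T) t := by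
  obtain ⟨C, hC⟩ := isCompact_Icc.exists_bound_of_continuousOn (hcont 0)
  have hC0 : 0 ≤ C := (norm_nonneg _).trans (hC 0 ⟨le_rfl, hT⟩)
  have hgrowth : ∀ t ∈ Icc 0 T, ∀ x, ‖f t x‖ ≤ K * ‖x‖ + C := by
    intro t ht x
    have h1 := (hlip t ht).dist_le_mul x 0
    rw [dist_eq_norm, dist_zero_right] at h1
    have h2 := norm_le_norm_sub_add (f t x) (f t 0)
    linarith [hC t ht]
  obtain ⟨R, hR0, hR⟩ : ∃ R : ℝ, 0 < R ∧ gronwallBound ‖x₀‖ K C T ≤ R :=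
    ⟨max 1 (gronwallBound ‖x₀‖ K C T), by positivity, le_max_right _ _⟩
  set g : ℝ → E → E := fun t x => f t (radialRetraction R x) with hg
  have hL : 0 ≤ K * R + C := by positivity
  have hPL : IsPicardLindelof g (⟨0, le_rfl, hT⟩ : Icc 0 T) x₀
      (⟨(K * R + C) * T, by positivity⟩ : ℝ≥0) 0 ⟨K * R + C, hL⟩ (K * 2) := by
    refine ⟨fun t ht => ((hlip t ht).comp (lipschitzWith_radialRetraction hR0)).lipschitzOnWith,
      fun x _ => hcont _, fun t ht x _ => (hgrowth t ht _).trans ?_, ?_⟩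
    · change _ ≤ K * R + C
      gcongr
      exact norm_radialRetraction_le hR0 x
    · simp only [sub_zero, sub_self, max_eq_left hT, NNReal.coe_zero]
      exact le_rfl
  obtain ⟨α, hα0, hα⟩ := hPL.exists_eq_forall_mem_Icc_hasDerivWithinAt₀
  have hαR : ∀ t ∈ Icc 0 T, ‖α t‖ ≤ R := by
    intro t ht
    have h := norm_le_gronwallBound_of_norm_deriv_right_le (K := K) (ε := C)
      (fun s hs => (hα s hs).continuousWithinAt)
      (fun s hs => (hα s (Ico_subset_Icc_self hs)).Icc_to_Ici hs) (congrArg norm hα0).le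
      (fun s hs => (hgrowth s (Ico_subset_Icc_self hs) _).trans (by
        gcongr
        exact norm_radialRetraction_le_norm hR0 _)) t ht
    refine h.trans (le_trans ?_ hR)
    exact gronwallBound_mono (norm_nonneg _) hC0 K.2 (by linarith [ht.2])
  refine ⟨α, hα0, fun t ht => ?_⟩
  have h := hα t ht
  simp only [hg, radialRetraction_of_norm_le hR0 (hαR t ht)] at h
  exact h

end ODE

section MatrixCalculus

variable {l m n : Type*}

lemma Matrix.norm_mul_le_card_mul [Fintype l] [Fintype m] [Fintype n]
    (A : Matrix l m ℝ) (B : Matrix m n ℝ) :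
    ‖A * B‖ ≤ Fintype.card m * ‖A‖ * ‖B‖ := by
  rw [Matrix.norm_le_iff (by positivity)]
  intro i j
  calc ‖(A * B) i j‖ ≤ ∑ k : m, ‖A i k * B k j‖ := by
        rw [Matrix.mul_apply]
        exact norm_sum_le _ _
    _ ≤ ∑ _k : m, ‖A‖ * ‖B‖ := by
        gcongr with k
        rw [norm_mul]
        gcongr
        · exact A.norm_entry_le_entrywise_sup_norm
        · exact B.norm_entry_le_entrywise_sup_norm
    _ = Fintype.card m * ‖A‖ * ‖B‖ := by
        rw [Finset.sum_const, Finset.card_univ, nsmul_eq_mul, mul_assoc]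

lemma HasDerivWithinAt.matrix_mul [Fintype l] [Fintype m] [Fintype n]
    {A : ℝ → Matrix l m ℝ} {B : ℝ → Matrix m n ℝ}
    {A' : Matrix l m ℝ} {B' : Matrix m n ℝ} {s : Set ℝ} {t : ℝ}
    (hA : HasDerivWithinAt A A' s t) (hB : HasDerivWithinAt B B' s t) :
    HasDerivWithinAt (fun t => A t * B t) (A' * B t + A t * B') s t := by
  refine hasDerivWithinAt_pi.2 fun i => hasDerivWithinAt_pi.2 fun j => ?_
  have hA' := fun k => hasDerivWithinAt_pi.1 (hasDerivWithinAt_pi.1 hA i) k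
  have hB' := fun k => hasDerivWithinAt_pi.1 (hasDerivWithinAt_pi.1 hB k) j
  simp only [Matrix.mul_apply, Matrix.add_apply, ← Finset.sum_add_distrib]
  exact HasDerivWithinAt.fun_sum fun k _ => (hA' k).mul (hB' k)

lemma HasDerivWithinAt.matrix_transpose [Fintype m] [Fintype n]
    {A : ℝ → Matrix n m ℝ} {A' : Matrix n m ℝ} {s : Set ℝ} {t : ℝ} (hA : HasDerivWithinAt A A' s t) :
    HasDerivWithinAt (fun t => (A t)ᵀ) A'ᵀ s t :=
  hasDerivWithinAt_pi.2 fun i => hasDerivWithinAt_pi.2 fun j =>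
    hasDerivWithinAt_pi.1 (hasDerivWithinAt_pi.1 hA j) i

lemma Matrix.norm_mulVec_le_card_mul [Fintype m] [Fintype n] (A : Matrix m n ℝ) (v : n → ℝ) :
    ‖A *ᵥ v‖ ≤ Fintype.card n * ‖A‖ * ‖v‖ := by
  simpa only [← Matrix.replicateCol_mulVec, Matrix.norm_replicateCol] using
    Matrix.norm_mul_le_card_mul A (Matrix.replicateCol Unit v)

lemma HasDerivWithinAt.matrix_mulVec_const [Fintype m] [Fintype n]
    {A : ℝ → Matrix m n ℝ} {A' : Matrix m n ℝ}
    {s : Set ℝ} {t : ℝ} (hA : HasDerivWithinAt A A' s t) (v : n → ℝ) :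
    HasDerivWithinAt (fun t => A t *ᵥ v) (A' *ᵥ v) s t :=
  hasDerivWithinAt_pi.2 fun i => HasDerivWithinAt.fun_sum fun j _ =>
    (hasDerivWithinAt_pi.1 (hasDerivWithinAt_pi.1 hA i) j).mul_const (v j)

lemma HasDerivWithinAt.const_dotProduct [Fintype n] {f : ℝ → n → ℝ} {f' : n → ℝ}
    {s : Set ℝ} {t : ℝ} (hf : HasDerivWithinAt f f' s t) (v : n → ℝ) :
    HasDerivWithinAt (fun t => v ⬝ᵥ f t) (v ⬝ᵥ f') s t :=
  HasDerivWithinAt.fun_sum fun j _ => (hasDerivWithinAt_pi.1 hf j).const_mul (v j)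

lemma ContinuousOn.matrix_mul [Fintype m] {A : ℝ → Matrix l m ℝ} {B : ℝ → Matrix m n ℝ} {s : Set ℝ}
    (hA : ContinuousOn A s) (hB : ContinuousOn B s) : ContinuousOn (fun t => A t * B t) s :=
  (continuous_fst.matrix_mul continuous_snd).comp_continuousOn (hA.prodMk hB)

lemma ContinuousOn.matrix_transpose {A : ℝ → Matrix m n ℝ} {s : Set ℝ}
    (hA : ContinuousOn A s) : ContinuousOn (fun t => (A t)ᵀ) s :=
  continuous_id.matrix_transpose.comp_continuousOn hA

variable [Fintype n] [DecidableEq n]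

lemma ContinuousWithinAt.matrix_inv {A : ℝ → Matrix n n ℝ} {s : Set ℝ} {t : ℝ}
    (hA : ContinuousWithinAt A s t) (hdet : IsUnit (A t).det) :
    ContinuousWithinAt (fun t => (A t)⁻¹) s t :=
  (continuousAt_matrix_inv (A t)
    (NormedRing.inverse_continuousAt hdet.unit)).comp_continuousWithinAt hA

lemma HasDerivWithinAt.matrix_inv {A : ℝ → Matrix n n ℝ} {A' : Matrix n n ℝ}
    {s : Set ℝ} {t : ℝ} (hA : HasDerivWithinAt A A' s t) (ht : t ∈ s)
    (hdet : ∀ r ∈ s, IsUnit (A r).det) :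
    HasDerivWithinAt (fun t => (A t)⁻¹) (-((A t)⁻¹ * A' * (A t)⁻¹)) s t := by
  have hinv : Filter.Tendsto (fun r => (A r)⁻¹) (𝓝[s \ {t}] t) (𝓝 (A t)⁻¹) :=
    (ContinuousWithinAt.matrix_inv hA.continuousWithinAt (hdet t ht)).mono_left
      (nhdsWithin_mono t sdiff_subset)
  refine hasDerivWithinAt_iff_tendsto_slope.mpr ?_
  have hslope : Filter.Tendsto (slope A t) (𝓝[s \ {t}] t) (𝓝 A') :=
    hasDerivWithinAt_iff_tendsto_slope.mp hA
  refine (((hinv.mul hslope).mul_const (A t)⁻¹).neg).congr' ?_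
  filter_upwards [self_mem_nhdsWithin] with r hr
  have h1 := Matrix.nonsing_inv_mul (A r) (hdet r hr.1)
  have h2 := Matrix.mul_nonsing_inv (A t) (hdet t ht)
  rw [slope_def_module, slope_def_module, Matrix.mul_smul, Matrix.smul_mul, ← smul_neg,
    Matrix.mul_sub, Matrix.sub_mul, h1, Matrix.mul_assoc _ (A t), h2, neg_sub, one_mul, mul_one]

end MatrixCalculus

section Riccati

/-- Global solvability of the terminal-value problem for a linear matrix differential equation. -/
lemma exists_linear_matrix_ode_terminal {m n : Type*} [Fintype m] [Fintype n] {T : ℝ}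
    (hT : 0 ≤ T) {H : ℝ → Matrix m m ℝ} (hH : ContinuousOn H (Icc 0 T)) (V₀ : Matrix m n ℝ) :
    ∃ V : ℝ → Matrix m n ℝ, V T = V₀ ∧
      ∀ t ∈ Icc 0 T, HasDerivWithinAt V (H t * V t) (Icc 0 T) t := by
  obtain ⟨C, hC⟩ := isCompact_Icc.exists_bound_of_continuousOn hH
  have hC0 : 0 ≤ C := (norm_nonneg _).trans (hC 0 ⟨le_rfl, hT⟩)
  have hlip : ∀ t ∈ Icc 0 T, LipschitzWith (⟨Fintype.card m * C, by positivity⟩ : ℝ≥0)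
      (fun V : Matrix m n ℝ => -(H (T - t) * V)) := by
    refine fun t ht => LipschitzWith.of_dist_le_mul fun V W => ?_
    rw [dist_neg_neg, dist_eq_norm, dist_eq_norm, ← Matrix.mul_sub]
    refine (Matrix.norm_mul_le_card_mul _ _).trans ?_
    change _ ≤ Fintype.card m * C * ‖V - W‖
    gcongr
    exact hC _ (reflect_mem_Icc ht)
  have hcont : ∀ V : Matrix m n ℝ, ContinuousOn (fun t => -(H (T - t) * V)) (Icc 0 T) :=
    fun V => (ContinuousOn.matrix_mul (hH.comp (by fun_prop) fun t ht => reflect_mem_Icc ht)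
      continuousOn_const).neg
  obtain ⟨W, hW0, hW⟩ :=
    exists_forall_mem_Icc_hasDerivWithinAt_of_lipschitzWith hT hlip hcont V₀
  refine ⟨fun t => W (T - t), by simpa using hW0, fun t ht => ?_⟩
  have h := (hW _ (reflect_mem_Icc ht)).reflect_Icc
  rwa [sub_sub_cancel, neg_neg] at h

/-- Uniqueness for the terminal-value matrix Riccati equation. -/
lemma riccati_terminal_unique {d : ℕ} {T : ℝ} {A S Q P P₂ : ℝ → Mat d}
    (hA : ContinuousOn A (Icc 0 T)) (hS : ContinuousOn S (Icc 0 T))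
    (hP : ∀ t ∈ Icc 0 T, HasDerivWithinAt P
      (-(P t * A t + (A t)ᵀ * P t - P t * S t * P t + Q t)) (Icc 0 T) t)
    (hP₂ : ∀ t ∈ Icc 0 T, HasDerivWithinAt P₂
      (-(P₂ t * A t + (A t)ᵀ * P₂ t - P₂ t * S t * P₂ t + Q t)) (Icc 0 T) t)
    (hT : P₂ T = P T) : ∀ t ∈ Icc 0 T, P₂ t = P t := by
  have hPc : ContinuousOn P (Icc 0 T) := fun t ht => (hP t ht).continuousWithinAt
  have hP₂c : ContinuousOn P₂ (Icc 0 T) := fun t ht => (hP₂ t ht).continuousWithinAt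
  have hMc : ContinuousOn (fun t => A t - S t * P₂ t) (Icc 0 T) := hA.sub (hS.matrix_mul hP₂c)
  have hNc : ContinuousOn (fun t => (A t)ᵀ - P t * S t) (Icc 0 T) :=
    hA.matrix_transpose.sub (hPc.matrix_mul hS)
  obtain ⟨C, hC⟩ := isCompact_Icc.exists_bound_of_continuousOn hMc
  obtain ⟨D, hD⟩ := isCompact_Icc.exists_bound_of_continuousOn hNc
  intro t ht
  refine sub_eq_zero.mp (eq_zero_of_norm_deriv_le_of_eq_zero_right_endpoint
    (f := fun t => P₂ t - P t) (K := d * (C + D)) (fun t ht => (hP₂ t ht).sub (hP t ht))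
    (sub_eq_zero.mpr hT) (fun t ht => ?_) t ht)
  have hsplit : -(P₂ t * A t + (A t)ᵀ * P₂ t - P₂ t * S t * P₂ t + Q t)
      - -(P t * A t + (A t)ᵀ * P t - P t * S t * P t + Q t)
      = -((P₂ t - P t) * (A t - S t * P₂ t) + ((A t)ᵀ - P t * S t) * (P₂ t - P t)) := by
    noncomm_ring
  rw [hsplit, norm_neg]
  calc _ ≤ d * ‖P₂ t - P t‖ * C + d * D * ‖P₂ t - P t‖ := by
        refine (norm_add_le _ _).trans (add_le_add ?_ ?_)
        · refine (Matrix.norm_mul_le_card_mul _ _).trans ?_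
          rw [Fintype.card_fin]
          gcongr
          exact hC t ht
        · refine (Matrix.norm_mul_le_card_mul _ _).trans ?_
          rw [Fintype.card_fin]
          gcongr
          exact hD t ht
    _ = d * (C + D) * ‖P₂ t - P t‖ := by ring

lemma exists_hamiltonian_system {d : ℕ} {T : ℝ} (hT : 0 ≤ T) {A S Q : ℝ → Mat d}
    (hA : ContinuousOn A (Icc 0 T)) (hS : ContinuousOn S (Icc 0 T))
    (hQ : ContinuousOn Q (Icc 0 T)) (G : Mat d) :
    ∃ X Y : ℝ → Mat d, X T = 1 ∧ Y T = G ∧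
      (∀ t ∈ Icc 0 T, HasDerivWithinAt X (A t * X t - S t * Y t) (Icc 0 T) t) ∧
      (∀ t ∈ Icc 0 T, HasDerivWithinAt Y (-(Q t * X t) - (A t)ᵀ * Y t) (Icc 0 T) t) := by
  have hH : ContinuousOn (fun t => Matrix.fromBlocks (A t) (-S t) (-Q t) (-(A t)ᵀ)) (Icc 0 T) :=
    (Continuous.matrix_fromBlocks (X := Mat d × Mat d × Mat d × Mat d) continuous_fst
      continuous_snd.fst continuous_snd.snd.fst continuous_snd.snd.snd).comp_continuousOn
      (hA.prodMk (hS.neg.prodMk (hQ.neg.prodMk hA.matrix_transpose.neg)))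
  obtain ⟨V, hVT, hV⟩ := exists_linear_matrix_ode_terminal hT hH (Matrix.fromRows 1 G)
  refine ⟨fun t => (V t).toRows₁, fun t => (V t).toRows₂, by simp [hVT], by simp [hVT],
    fun t ht => ?_, fun t ht => ?_⟩
  all_goals
    have h := hV t ht
    rw [← Matrix.fromRows_toRows (V t), Matrix.fromBlocks_mul_fromRows] at h
    refine hasDerivWithinAt_pi.2 fun i => hasDerivWithinAt_pi.2 fun j => ?_
  · have := hasDerivWithinAt_pi.1 (hasDerivWithinAt_pi.1 h (Sum.inl i)) j
    simpa [sub_eq_add_neg] using this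
  · have := hasDerivWithinAt_pi.1 (hasDerivWithinAt_pi.1 h (Sum.inr i)) j
    simpa [sub_eq_add_neg] using this

/-- Derivative of `Xᵀ Y` along solutions of the Hamiltonian system. -/
lemma hasDerivWithinAt_hamiltonian_form {d : ℕ} {T t : ℝ} {A S Q X Y : ℝ → Mat d}
    (hS : (S t)ᵀ = S t)
    (hX : HasDerivWithinAt X (A t * X t - S t * Y t) (Icc 0 T) t)
    (hY : HasDerivWithinAt Y (-(Q t * X t) - (A t)ᵀ * Y t) (Icc 0 T) t) :
    HasDerivWithinAt (fun t => (X t)ᵀ * Y t)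
      (-((Y t)ᵀ * S t * Y t + (X t)ᵀ * Q t * X t)) (Icc 0 T) t := by
  convert hX.matrix_transpose.matrix_mul hY using 1
  rw [Matrix.transpose_sub, Matrix.transpose_mul, Matrix.transpose_mul, hS]
  noncomm_ring

/-- Existence of a positive semidefinite solution to the terminal-value matrix Riccati equation,
obtained as `Y X⁻¹` from the associated linear Hamiltonian system. -/
lemma exists_riccati_posSemidef {d : ℕ} {T : ℝ} (hT : 0 ≤ T) {A S Q : ℝ → Mat d}
    (hA : ContinuousOn A (Icc 0 T)) (hS : ContinuousOn S (Icc 0 T))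
    (hQ : ContinuousOn Q (Icc 0 T)) (hSpos : ∀ t ∈ Icc 0 T, (S t).PosSemidef)
    (hQpos : ∀ t ∈ Icc 0 T, (Q t).PosSemidef) {G : Mat d} (hG : G.PosSemidef) :
    ∃ P : ℝ → Mat d,
      (∀ t ∈ Icc 0 T, HasDerivWithinAt P
        (-(P t * A t + (A t)ᵀ * P t - P t * S t * P t + Q t)) (Icc 0 T) t) ∧
      P T = G ∧ ∀ t ∈ Icc 0 T, (P t).PosSemidef := by
  obtain ⟨X, Y, hXT, hYT, hX, hY⟩ := exists_hamiltonian_system hT hA hS hQ G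
  have hTmem : T ∈ Icc 0 T := ⟨hT, le_rfl⟩
  have hGT : Gᵀ = G := hG.isHermitian
  have hST : ∀ t ∈ Icc 0 T, (S t)ᵀ = S t := fun t ht => (hSpos t ht).isHermitian
  have hQT : ∀ t ∈ Icc 0 T, (Q t)ᵀ = Q t := fun t ht => (hQpos t ht).isHermitian
  have hW := fun t ht =>
    hasDerivWithinAt_hamiltonian_form (hST t ht) (hX t ht) (hY t ht)
  have hsymm : ∀ t ∈ Icc 0 T, (X t)ᵀ * Y t = (Y t)ᵀ * X t := by
    intro t ht
    have h := eq_zero_of_norm_deriv_le_of_eq_zero_right_endpoint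
      (f := fun t => (X t)ᵀ * Y t - ((X t)ᵀ * Y t)ᵀ) (K := 0)
      (fun t ht => (hW t ht).sub (hW t ht).matrix_transpose)
      (by simp [hXT, hYT, hGT]) (fun t ht => by
        simp [Matrix.transpose_add, Matrix.transpose_mul, hST t ht, hQT t ht, Matrix.mul_assoc])
      t ht
    simpa [sub_eq_zero] using h
  set φ : (Fin d → ℝ) → ℝ → ℝ := fun v t => v ⬝ᵥ ((X t)ᵀ * Y t) *ᵥ v with hφ
  have hφ_apply : ∀ v t, φ v t = X t *ᵥ v ⬝ᵥ Y t *ᵥ v := by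
    intro v t
    simp only [hφ]
    rw [← Matrix.mulVec_mulVec, Matrix.dotProduct_mulVec, Matrix.vecMul_transpose]
  set ψ : (Fin d → ℝ) → ℝ → ℝ := fun v t =>
    Y t *ᵥ v ⬝ᵥ S t *ᵥ (Y t *ᵥ v) + X t *ᵥ v ⬝ᵥ Q t *ᵥ (X t *ᵥ v) with hψ
  have hφ' : ∀ v, ∀ t ∈ Icc 0 T, HasDerivWithinAt (φ v) (-ψ v t) (Icc 0 T) t := by
    intro v t ht
    convert ((hW t ht).matrix_mulVec_const v).const_dotProduct v using 1
    simp only [hψ, Matrix.neg_mulVec, Matrix.add_mulVec, dotProduct_neg, dotProduct_add]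
    simp only [Matrix.mul_assoc, ← Matrix.mulVec_mulVec]
    simp only [Matrix.dotProduct_mulVec v, Matrix.vecMul_transpose]
  have hS_nonneg : ∀ v, ∀ t ∈ Icc 0 T, 0 ≤ Y t *ᵥ v ⬝ᵥ S t *ᵥ (Y t *ᵥ v) :=
    fun v t ht => (hSpos t ht).dotProduct_mulVec_nonneg (Y t *ᵥ v)
  have hQ_nonneg : ∀ v, ∀ t ∈ Icc 0 T, 0 ≤ X t *ᵥ v ⬝ᵥ Q t *ᵥ (X t *ᵥ v) :=
    fun v t ht => (hQpos t ht).dotProduct_mulVec_nonneg (X t *ᵥ v)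
  have hφ_anti : ∀ v, AntitoneOn (φ v) (Icc 0 T) := fun v =>
    antitoneOn_of_hasDerivWithinAt_nonpos (convex_Icc 0 T)
      (fun t ht => (hφ' v t ht).continuousWithinAt)
      (fun t ht => (hφ' v t (interior_subset ht)).mono interior_subset)
      (fun t ht => neg_nonpos.mpr (add_nonneg (hS_nonneg v t (interior_subset ht))
        (hQ_nonneg v t (interior_subset ht))))
  have hφ_T : ∀ v, 0 ≤ φ v T := by
    intro v
    simpa [hφ, hXT, hYT] using hG.dotProduct_mulVec_nonneg v
  have hφ_nonneg : ∀ v, ∀ t ∈ Icc 0 T, 0 ≤ φ v t := fun v t ht =>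
    (hφ_T v).trans (hφ_anti v ht hTmem ht.2)
  have hker : ∀ t₀ ∈ Icc 0 T, ∀ v, X t₀ *ᵥ v = 0 → v = 0 := by
    intro t₀ ht₀ v hv
    have hsub : Icc t₀ T ⊆ Icc 0 T := Icc_subset_Icc_left ht₀.1
    have hφ0 : ∀ t ∈ Icc t₀ T, φ v t = 0 := by
      intro t ht
      refine le_antisymm ((hφ_anti v ht₀ (hsub ht) ht.1).trans ?_) (hφ_nonneg v t (hsub ht))
      rw [hφ_apply, hv, zero_dotProduct]
    have hSY : ∀ t ∈ Ico t₀ T, S t *ᵥ (Y t *ᵥ v) = 0 := by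
      intro t ht
      have htI := Ico_subset_Icc_self ht
      have h1 : HasDerivWithinAt (φ v) (-ψ v t) (Icc t₀ T) t := (hφ' v t (hsub htI)).mono hsub
      have h2 : HasDerivWithinAt (φ v) 0 (Icc t₀ T) t :=
        (hasDerivWithinAt_const t (Icc t₀ T) (0 : ℝ)).congr hφ0 (hφ0 t htI)
      have h3 : -ψ v t = 0 :=
        (uniqueDiffOn_Icc (ht.1.trans_lt ht.2) t htI).eq_deriv _ h1 h2
      refine ((hSpos t (hsub htI)).dotProduct_mulVec_zero_iff _).mp ?_
      have h4 := hS_nonneg v t (hsub htI)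
      have h5 := hQ_nonneg v t (hsub htI)
      simp only [hψ] at h3
      rw [star_trivial]
      linarith
    obtain ⟨C, hC⟩ := isCompact_Icc.exists_bound_of_continuousOn hA
    have hx : ∀ t ∈ Icc t₀ T,
        HasDerivWithinAt (fun t => X t *ᵥ v) ((A t * X t - S t * Y t) *ᵥ v) (Icc t₀ T) t :=
      fun t ht => ((hX t (hsub ht)).matrix_mulVec_const v).mono hsub
    have h := eq_zero_of_abs_deriv_le_mul_abs_self_of_eq_zero_right (K := d * C)
      (fun t ht => (hx t ht).continuousWithinAt)
      (fun t ht => (hx t (Ico_subset_Icc_self ht)).Icc_to_Ici ht) hv (fun t ht => by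
        rw [Matrix.sub_mulVec, ← Matrix.mulVec_mulVec, ← Matrix.mulVec_mulVec, hSY t ht, sub_zero]
        refine (Matrix.norm_mulVec_le_card_mul _ _).trans ?_
        rw [Fintype.card_fin]
        gcongr
        exact hC t (hsub (Ico_subset_Icc_self ht))) T ⟨ht₀.2, le_rfl⟩
    simpa [hXT] using h
  have hdet : ∀ t ∈ Icc 0 T, IsUnit (X t).det := by
    intro t ht
    rw [isUnit_iff_ne_zero]
    intro h0
    obtain ⟨v, hv0, hv⟩ := Matrix.exists_mulVec_eq_zero_iff.mpr h0
    exact hv0 (hker t ht v hv)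
  refine ⟨fun t => Y t * (X t)⁻¹, fun t ht => ?_, by simp [hXT, hYT], fun t ht => ?_⟩
  · convert (hY t ht).matrix_mul ((hX t ht).matrix_inv ht hdet) using 1
    have h : X t * (X t)⁻¹ = 1 := Matrix.mul_nonsing_inv _ (hdet t ht)
    have hQX : Q t * X t * (X t)⁻¹ = Q t := by rw [Matrix.mul_assoc, h, Matrix.mul_one]
    have hAX : A t * X t * (X t)⁻¹ = A t := by rw [Matrix.mul_assoc, h, Matrix.mul_one]
    rw [Matrix.mul_assoc (X t)⁻¹, Matrix.sub_mul (A t * X t), hAX, Matrix.sub_mul, Matrix.neg_mul,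
      hQX]
    noncomm_ring
  · have hinv : (X t)⁻¹ * X t = 1 := Matrix.nonsing_inv_mul _ (hdet t ht)
    have hXP : (X t)ᵀ * (Y t * (X t)⁻¹) * X t = (X t)ᵀ * Y t := by
      rw [Matrix.mul_assoc, Matrix.mul_assoc (Y t), hinv, Matrix.mul_one]
    have hXu : IsUnit (X t) := (Matrix.isUnit_iff_isUnit_det _).mpr (hdet t ht)
    refine (hXu.posSemidef_star_left_conjugate_iff).mp ?_
    change ((X t)ᵀ * (Y t * (X t)⁻¹) * X t).PosSemidef
    rw [hXP]
    refine Matrix.PosSemidef.of_dotProduct_mulVec_nonneg ?_ fun v => hφ_nonneg v t ht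
    change ((X t)ᵀ * Y t)ᵀ = _
    rw [Matrix.transpose_mul, Matrix.transpose_transpose, hsymm t ht]

end Riccati

/-- the terminal-value matrix Riccati equation
`dP/dt = −(P Â + Âᵀ P − P B̂ R̂⁻¹ B̂ᵀ P + Q̂)`, `P_T = G`, with `R̂ ⪰ c·Id` (`c > 0`),
`Q̂ ⪰ 0` and `G ⪰ 0`, has exactly one continuously differentiable solution on all of
`[0,T]`, and that solution is positive semidefinite everywhere. -/
theorem riccati_global_existence_uniqueness
    (T : ℝ) (hT : 0 < T) (d κ : ℕ)
    (Ah : ℝ → Mat d) (Bh : ℝ → Matrix (Fin d) (Fin κ) ℝ)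
    (Rh : ℝ → Matrix (Fin κ) (Fin κ) ℝ) (Qh : ℝ → Mat d)
    (hAh : ContinuousOn Ah (Icc (0:ℝ) T)) (hBh : ContinuousOn Bh (Icc (0:ℝ) T))
    (hRh : ContinuousOn Rh (Icc (0:ℝ) T)) (hQh : ContinuousOn Qh (Icc (0:ℝ) T))
    (c : ℝ) (hc : 0 < c)
    (hRpos : ∀ t ∈ Icc (0:ℝ) T,
      (Rh t - c • (1 : Matrix (Fin κ) (Fin κ) ℝ)).PosSemidef)
    (hQpos : ∀ t ∈ Icc (0:ℝ) T, (Qh t).PosSemidef)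
    (G : Mat d) (hG : G.PosSemidef) :
    ∃ P : ℝ → Mat d,
      (∀ t ∈ Icc (0:ℝ) T,
        HasDerivWithinAt P
          (-(P t * Ah t + (Ah t)ᵀ * P t - P t * Bh t * (Rh t)⁻¹ * (Bh t)ᵀ * P t + Qh t))
          (Icc (0:ℝ) T) t) ∧
      P T = G ∧
      (∀ t ∈ Icc (0:ℝ) T, (P t).PosSemidef) ∧
      ∀ P₂ : ℝ → Mat d,
        ((∀ t ∈ Icc (0:ℝ) T,
          HasDerivWithinAt P₂
            (-(P₂ t * Ah t + (Ah t)ᵀ * P₂ t - P₂ t * Bh t * (Rh t)⁻¹ * (Bh t)ᵀ * P₂ t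
              + Qh t))
            (Icc (0:ℝ) T) t) ∧ P₂ T = G) →
        ∀ t ∈ Icc (0:ℝ) T, P₂ t = P t := by
  have hR : ∀ t ∈ Icc (0:ℝ) T, (Rh t).PosDef := fun t ht => by
    simpa using (Matrix.PosDef.one.smul hc).add_posSemidef (hRpos t ht)
  have hRdet : ∀ t ∈ Icc (0:ℝ) T, IsUnit (Rh t).det := fun t ht =>
    (Matrix.isUnit_iff_isUnit_det _).mp (hR t ht).isUnit
  have hS : ContinuousOn (fun t => Bh t * (Rh t)⁻¹ * (Bh t)ᵀ) (Icc (0:ℝ) T) :=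
    (hBh.matrix_mul fun t ht => (hRh t ht).matrix_inv (hRdet t ht)).matrix_mul
      hBh.matrix_transpose
  have hSpos : ∀ t ∈ Icc (0:ℝ) T, (Bh t * (Rh t)⁻¹ * (Bh t)ᵀ).PosSemidef := fun t ht =>
    (hR t ht).inv.posSemidef.mul_mul_conjTranspose_same (Bh t)
  have hassoc : ∀ (P : Mat d) (t : ℝ), P * Bh t * (Rh t)⁻¹ * (Bh t)ᵀ * P
      = P * (Bh t * (Rh t)⁻¹ * (Bh t)ᵀ) * P := fun P t => by simp only [Matrix.mul_assoc]
  simp only [hassoc]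
  obtain ⟨P, hP, hPT, hPpos⟩ := exists_riccati_posSemidef hT.le hAh hS hQh hSpos hQpos hG
  exact ⟨P, hP, hPT, hPpos, fun P₂ hP₂ =>
    riccati_terminal_unique hAh hS hP hP₂.1 (hP₂.2.trans hPT.symm)⟩
end
end

section
/- Let the LQ coefficients and smooth common-noise coefficients N, Γ be given, assume Q_t + Q̄_t − Q̄_t S_t ⪰ 0 for every t and Q + Q̄ − Q̄S ⪰ 0, and suppose the unique C¹ solution e : [0,T] → ℝ^{d×d} of de_t/dt = (C_t + Γ_t)ᵀ e_t, e_0 = Id, satisfies e_t = λ_t·Id with λ_t > 0 for every t ∈ [0,T]. Then for every x₀ ∈ ℝ^d the smooth forward–backward system x̄_t = x₀ + ∫₀ᵗ ((N_s + Γ_s + A_s + C_s)x̄_s − B_s R_s⁻¹ B_sᵀ ȳ_s) ds, ȳ_t = (Q + Q̄ − Q̄S)x̄_T + ∫_t^T (N_sᵀ ȳ_s + (Q_s + Q̄_s − Q̄_s S_s)x̄_s + A_sᵀ ȳ_s) ds has exactly one pair of continuous solutions (x̄, ȳ) on [0,T]. -/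
open MeasureTheory Matrix Set

noncomputable section

abbrev Vec (d : ℕ) := Fin d → ℝ

attribute [local instance] Matrix.normedAddCommGroup Matrix.normedSpace

section LinearODE

variable {E : Type*} [NormedAddCommGroup E] [NormedSpace ℝ E]

/-- The radial retraction onto the closed ball of radius `ρ` is Lipschitz with constant `2`. -/
lemma norm_radialRetraction_sub_le {ρ : ℝ} (hρ : 0 < ρ) (z w : E) :
    ‖(ρ / max ρ ‖z‖) • z - (ρ / max ρ ‖w‖) • w‖ ≤ 2 * ‖z - w‖ := by
  set a := max ρ ‖z‖
  set b := max ρ ‖w‖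
  have ha : 0 < a := hρ.trans_le (le_max_left _ _)
  have hb : 0 < b := hρ.trans_le (le_max_left _ _)
  have hab : |b - a| ≤ ‖z - w‖ := by
    rw [abs_sub_comm]
    exact (abs_max_sub_max_le_abs _ _ _).trans (abs_norm_sub_norm_le z w) |>.trans' (by
      simp only [a, b, max_comm ρ]; rfl)
  have hsplit : (ρ / a) • z - (ρ / b) • w = (ρ / a) • (z - w) + (ρ / a - ρ / b) • w := by
    module
  have hfirst : ‖(ρ / a) • (z - w)‖ ≤ ‖z - w‖ := by
    rw [norm_smul, Real.norm_of_nonneg (by positivity)]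
    exact mul_le_of_le_one_left (norm_nonneg _) ((div_le_one ha).2 (le_max_left _ _))
  have hsecond : ‖(ρ / a - ρ / b) • w‖ ≤ ‖z - w‖ := by
    have hcoef : ρ / a - ρ / b = (ρ / a) * ((b - a) / b) := by field_simp
    rw [norm_smul, hcoef, norm_mul, Real.norm_of_nonneg (by positivity : 0 ≤ ρ / a),
      norm_div, Real.norm_of_nonneg hb.le, Real.norm_eq_abs]
    calc ρ / a * (|b - a| / b) * ‖w‖ ≤ 1 * (|b - a| / b) * b := by
          gcongr
          · exact (div_le_one ha).2 (le_max_left _ _)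
          · exact le_max_right _ _
      _ = |b - a| := by field_simp
      _ ≤ ‖z - w‖ := hab
  rw [hsplit]
  linarith [norm_add_le ((ρ / a) • (z - w)) ((ρ / a - ρ / b) • w)]

lemma norm_radialRetraction_le_s18 {ρ : ℝ} (hρ : 0 < ρ) (z : E) :
    ‖(ρ / max ρ ‖z‖) • z‖ ≤ ρ ∧ ‖(ρ / max ρ ‖z‖) • z‖ ≤ ‖z‖ := by
  have ha : 0 < max ρ ‖z‖ := hρ.trans_le (le_max_left _ _)
  rw [norm_smul, Real.norm_of_nonneg (by positivity)]
  constructor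
  · rw [div_mul_eq_mul_div, div_le_iff₀ ha]
    exact mul_le_mul_of_nonneg_left (le_max_right _ _) hρ.le
  · exact mul_le_of_le_one_left (norm_nonneg _) ((div_le_one ha).2 (le_max_left _ _))

variable [CompleteSpace E] {L : ℝ → E →L[ℝ] E} {a b : ℝ}

lemma exists_norm_le_of_strongly_continuousOn (hL : ∀ z, ContinuousOn (fun t ↦ L t z) (Icc a b)) :
    ∃ K : NNReal, ∀ t ∈ Icc a b, ‖L t‖ ≤ K := by
  obtain ⟨K, hK⟩ := banach_steinhaus (g := fun t : Icc a b ↦ L t) fun z ↦ by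
    obtain ⟨M, hM⟩ := isCompact_Icc.exists_bound_of_continuousOn (hL z)
    exact ⟨M, fun t ↦ hM t t.2⟩
  exact ⟨K.toNNReal, fun t ht ↦ (hK ⟨t, ht⟩).trans (Real.le_coe_toNNReal K)⟩

/-- A linear differential equation with strongly continuous coefficient is globally solvable. -/
theorem exists_hasDerivWithinAt_linear (hab : a ≤ b)
    (hL : ∀ z, ContinuousOn (fun t ↦ L t z) (Icc a b)) (z₀ : E) :
    ∃ z : ℝ → E, z a = z₀ ∧ ∀ t ∈ Icc a b, HasDerivWithinAt z (L t (z t)) (Icc a b) t := by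
  obtain ⟨K, hK⟩ := exists_norm_le_of_strongly_continuousOn hL
  obtain ⟨ρ, hρ, hρ'⟩ : ∃ ρ : NNReal, 0 < (ρ : ℝ) ∧ ‖z₀‖ * Real.exp (K * (b - a)) ≤ ρ :=
    ⟨⟨‖z₀‖ * Real.exp (K * (b - a)) + 1, by positivity⟩, by
      change 0 < ‖z₀‖ * Real.exp (K * (b - a)) + 1; positivity, le_add_of_nonneg_right zero_le_one⟩
  let π : E → E := fun z ↦ ((ρ : ℝ) / max (ρ : ℝ) ‖z‖) • z
  have hpl : IsPicardLindelof (fun t z ↦ L t (π z)) (⟨a, left_mem_Icc.2 hab⟩ : Icc a b) z₀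
      (K * ρ * (b - a).toNNReal) 0 (K * ρ) (K * 2) :=
    { lipschitzOnWith := fun t ht ↦ by
        refine LipschitzWith.lipschitzOnWith ?_
        exact ((L t).lipschitz.weaken (by exact_mod_cast hK t ht)).comp
          (LipschitzWith.of_dist_le_mul fun z w ↦ by
            rw [dist_eq_norm, dist_eq_norm]
            exact norm_radialRetraction_sub_le hρ z w)
      continuousOn := fun x _ ↦ hL _
      norm_le := fun t ht x _ ↦ by
        push_cast
        exact ((L t).le_opNorm _).trans (by
          gcongr
          exacts [hK t ht, (norm_radialRetraction_le_s18 hρ x).1])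
      mul_max_le := by
        simp [hab] }
  obtain ⟨z, hz₀, hz⟩ := hpl.exists_eq_forall_mem_Icc_hasDerivWithinAt₀
  refine ⟨z, hz₀, fun t ht ↦ ?_⟩
  have hbound := norm_le_gronwallBound_of_norm_deriv_right_le (δ := ‖z₀‖) (K := K) (ε := 0)
    (fun t ht ↦ (hz t ht).continuousWithinAt)
    (fun t ht ↦ (hz t (Ico_subset_Icc_self ht)).mono_of_mem_nhdsWithin
      (Icc_mem_nhdsGE_of_mem ht)) (by rw [hz₀])
    (fun t ht ↦ by
      rw [add_zero]
      exact ((L t).le_opNorm _).trans (by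
        gcongr
        exacts [hK t (Ico_subset_Icc_self ht), (norm_radialRetraction_le_s18 hρ (z t)).2])) t ht
  rw [gronwallBound_ε0] at hbound
  have hzρ : ‖z t‖ ≤ ρ := hbound.trans (hρ'.trans' (by gcongr; exact ht.2))
  have hπ : π (z t) = z t := by simp [π, max_eq_left hzρ, div_self hρ.ne']
  simpa only [hπ] using hz t ht

theorem eqOn_zero_of_linear_of_left (hL : ∀ z, ContinuousOn (fun t ↦ L t z) (Icc a b)) {z : ℝ → E}
    (hz : ∀ t ∈ Icc a b, HasDerivWithinAt z (L t (z t)) (Icc a b) t) (hza : z a = 0) :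
    ∀ t ∈ Icc a b, z t = 0 := by
  obtain ⟨K, hK⟩ := exists_norm_le_of_strongly_continuousOn hL
  exact eq_zero_of_abs_deriv_le_mul_abs_self_of_eq_zero_right (K := K)
    (fun t ht ↦ (hz t ht).continuousWithinAt)
    (fun t ht ↦ (hz t (Ico_subset_Icc_self ht)).mono_of_mem_nhdsWithin
      (Icc_mem_nhdsGE_of_mem ht)) hza
    (fun t ht ↦ (L t).le_of_opNorm_le (hK t (Ico_subset_Icc_self ht)) _)

theorem eqOn_zero_of_linear_of_right (hL : ∀ z, ContinuousOn (fun t ↦ L t z) (Icc a b))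
    {z : ℝ → E} (hz : ∀ t ∈ Icc a b, HasDerivWithinAt z (L t (z t)) (Icc a b) t) (hzb : z b = 0) :
    ∀ t ∈ Icc a b, z t = 0 := by
  obtain ⟨K, hK⟩ := exists_norm_le_of_strongly_continuousOn hL
  refine ODE_solution_unique_of_mem_Icc_left (v := fun t ↦ L t) (s := fun _ ↦ univ) (K := K)
    (fun t ht ↦ ((L t).lipschitz.weaken
      (by exact_mod_cast hK t (Ioc_subset_Icc_self ht))).lipschitzOnWith)
    (fun t ht ↦ (hz t ht).continuousWithinAt)
    (fun t ht ↦ (hz t (Ioc_subset_Icc_self ht)).mono_of_mem_nhdsWithin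
      (Icc_mem_nhdsLE_of_mem ht)) (fun _ _ ↦ mem_univ _) continuousOn_const
    (fun t _ ↦ by simpa using hasDerivWithinAt_const t (Iic t) (0 : E)) (fun _ _ ↦ mem_univ _) hzb

/-- The solution operators of a linear differential equation. -/
theorem exists_linear_flow (hab : a ≤ b) (hL : ∀ z, ContinuousOn (fun t ↦ L t z) (Icc a b)) :
    ∃ Φ : E →ₗ[ℝ] E, ∀ z₀, ∃ z : ℝ → E, z a = z₀ ∧ z b = Φ z₀ ∧
      ∀ t ∈ Icc a b, HasDerivWithinAt z (L t (z t)) (Icc a b) t := by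
  choose Z hZa hZ using exists_hasDerivWithinAt_linear hab hL
  have hb : b ∈ Icc a b := right_mem_Icc.2 hab
  refine ⟨⟨⟨fun z₀ ↦ Z z₀ b, fun u v ↦ ?_⟩, fun c u ↦ ?_⟩, fun z₀ ↦ ⟨Z z₀, hZa _, rfl, hZ _⟩⟩
  · have := eqOn_zero_of_linear_of_left hL (z := fun t ↦ Z (u + v) t - (Z u t + Z v t))
      (fun t ht ↦ by
        simpa only [map_sub, map_add] using
          (hZ (u + v) t ht).fun_sub ((hZ u t ht).fun_add (hZ v t ht)))
      (by simp [hZa]) b hb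
    exact sub_eq_zero.1 this
  · have := eqOn_zero_of_linear_of_left hL (z := fun t ↦ Z (c • u) t - c • Z u t)
      (fun t ht ↦ by
        simpa only [map_sub, map_smul] using
          (hZ (c • u) t ht).fun_sub ((hZ u t ht).fun_const_smul c))
      (by simp [hZa]) b hb
    exact sub_eq_zero.1 this

/-- Integral equations along a continuous integrand are initial value problems. -/
theorem forall_eq_add_integral_iff {u g : ℝ → E} (hg : ContinuousOn g (Icc a b)) {t₀ : ℝ}
    (ht₀ : t₀ ∈ Icc a b) (u₀ : E) :
    (∀ t ∈ Icc a b, u t = u₀ + ∫ s in t₀..t, g s) ↔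
      u t₀ = u₀ ∧ ∀ t ∈ Icc a b, HasDerivWithinAt u (g t) (Icc a b) t := by
  have hg' : ContinuousOn (Function.uncurry fun t (_ : E) ↦ g t) (Icc a b ×ˢ univ) :=
    hg.comp continuousOn_fst fun p hp ↦ hp.1
  constructor
  · intro h
    refine ⟨by simpa using h t₀ ht₀, fun t ht ↦ ?_⟩
    exact (ODE.hasDerivWithinAt_picard_Icc (α := fun _ ↦ 0) ht₀ hg' continuousOn_const
      (fun _ _ ↦ mem_univ _) u₀ ht).congr_of_mem h ht
  · rintro ⟨h₀, h⟩ t ht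
    have hsub : uIcc t₀ t ⊆ Icc a b := uIcc_subset_Icc ht₀ ht
    have := ODE.picard_eq_of_hasDerivAt (α := u) (t₀ := t₀) (t := t) (u := univ)
      (hg'.mono (prod_mono hsub subset_rfl)) (fun s hs ↦ (h s (hsub hs)).mono hsub)
      (mapsTo_univ _ _)
    rw [← this, ODE.picard_apply, h₀]

end LinearODE

section TwoPoint

variable {n m : Type*} [Fintype n] {a b : ℝ}

lemma ContinuousOn.matrix_mulVec {M : ℝ → Matrix m n ℝ} {v : ℝ → n → ℝ} {s : Set ℝ}
    (hM : ContinuousOn M s) (hv : ContinuousOn v s) : ContinuousOn (fun t ↦ M t *ᵥ v t) s :=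
  (continuous_fst.matrix_mulVec continuous_snd).comp_continuousOn (hM.prodMk hv)

lemma HasDerivWithinAt.dotProduct {x y : ℝ → n → ℝ} {x' y' : n → ℝ} {s : Set ℝ} {t : ℝ}
    (hx : HasDerivWithinAt x x' s t) (hy : HasDerivWithinAt y y' s t) :
    HasDerivWithinAt (fun τ ↦ x τ ⬝ᵥ y τ) (x' ⬝ᵥ y t + x t ⬝ᵥ y') s t := by
  simp only [_root_.dotProduct, ← Finset.sum_add_distrib]
  exact HasDerivWithinAt.fun_sum fun i _ ↦
    (hasDerivWithinAt_pi.1 hx i).mul (hasDerivWithinAt_pi.1 hy i)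

/-- The coefficient `(x, y) ↦ (P x - K y, -(Fᵀ y) - H x)` of the coupled system. -/
def coupledField (P F K H : Matrix n n ℝ) : ((n → ℝ) × (n → ℝ)) →L[ℝ] ((n → ℝ) × (n → ℝ)) :=
  LinearMap.toContinuousLinearMap
    { toFun := fun z ↦ (P *ᵥ z.1 - K *ᵥ z.2, -(Fᵀ *ᵥ z.2 + H *ᵥ z.1))
      map_add' := fun z w ↦ by
        ext i <;> (simp [mulVec_add]; ring)
      map_smul' := fun c z ↦ by
        ext i <;> simp [mulVec_smul, mul_sub] }

lemma continuousOn_coupledField {P F K H : ℝ → Matrix n n ℝ} {s : Set ℝ}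
    (hP : ContinuousOn P s) (hF : ContinuousOn F s) (hK : ContinuousOn K s)
    (hH : ContinuousOn H s) (z : (n → ℝ) × (n → ℝ)) :
    ContinuousOn (fun t ↦ coupledField (P t) (F t) (K t) (H t) z) s := by
  have hFt : ContinuousOn (fun t ↦ (F t)ᵀ) s := continuous_id.matrix_transpose.comp_continuousOn hF
  exact ((hP.matrix_mulVec continuousOn_const).sub (hK.matrix_mulVec continuousOn_const)).prodMk
    ((hFt.matrix_mulVec continuousOn_const).add (hH.matrix_mulVec continuousOn_const)).neg

/-- A homogeneous coupled system with positive semidefinite coupling has only the trivial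
solution, provided the drift mismatch `P - F` is scalar and is integrated by a weight `w`. -/
theorem coupled_eqOn_zero [DecidableEq n] (hab : a < b) {P F K H : ℝ → Matrix n n ℝ}
    {G : Matrix n n ℝ}
    (hP : ContinuousOn P (Icc a b)) (hF : ContinuousOn F (Icc a b))
    (hKpos : ∀ t ∈ Icc a b, (K t).PosSemidef) (hHpos : ∀ t ∈ Icc a b, (H t).PosSemidef)
    (hGpos : G.PosSemidef) {c w : ℝ → ℝ} (hc : ∀ t ∈ Icc a b, P t = F t + c t • 1)
    (hw : ∀ t ∈ Icc a b, 0 < w t)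
    (hw' : ∀ t ∈ Icc a b, HasDerivWithinAt w (-(c t * w t)) (Icc a b) t)
    {x y : ℝ → n → ℝ}
    (hx : ∀ t ∈ Icc a b, HasDerivWithinAt x (P t *ᵥ x t - K t *ᵥ y t) (Icc a b) t)
    (hy : ∀ t ∈ Icc a b, HasDerivWithinAt y (-((F t)ᵀ *ᵥ y t + H t *ᵥ x t)) (Icc a b) t)
    (hxa : x a = 0) (hyb : y b = G *ᵥ x b) :
    ∀ t ∈ Icc a b, x t = 0 ∧ y t = 0 := by
  have ha : a ∈ Icc a b := left_mem_Icc.2 hab.le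
  have hb : b ∈ Icc a b := right_mem_Icc.2 hab.le
  have hquad : ∀ {M : Matrix n n ℝ}, M.PosSemidef → ∀ v, 0 ≤ v ⬝ᵥ M *ᵥ v := fun hM v ↦ by
    simpa using hM.dotProduct_mulVec_nonneg v
  let φ : ℝ → ℝ := fun t ↦ w t * (x t ⬝ᵥ y t)
  let φ' : ℝ → ℝ := fun t ↦ -(w t * (y t ⬝ᵥ K t *ᵥ y t + x t ⬝ᵥ H t *ᵥ x t))
  have hφ : ∀ t ∈ Icc a b, HasDerivWithinAt φ (φ' t) (Icc a b) t := fun t ht ↦ by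
    convert! (hw' t ht).fun_mul ((hx t ht).dotProduct (hy t ht)) using 1
    have h₁ : x t ⬝ᵥ (F t)ᵀ *ᵥ y t = F t *ᵥ x t ⬝ᵥ y t := by
      rw [mulVec_transpose, dotProduct_comm, ← dotProduct_mulVec, dotProduct_comm]
    simp only [φ', hc t ht, add_mulVec, smul_mulVec, one_mulVec, sub_dotProduct, add_dotProduct,
      smul_dotProduct, dotProduct_neg, dotProduct_add, h₁, smul_eq_mul,
      dotProduct_comm (K t *ᵥ y t)]
    ring
  have hφ'_nonpos : ∀ t ∈ Icc a b, φ' t ≤ 0 := fun t ht ↦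
    neg_nonpos.2 (mul_nonneg (hw t ht).le
      (add_nonneg (hquad (hKpos t ht) _) (hquad (hHpos t ht) _)))
  have hanti : AntitoneOn φ (Icc a b) :=
    antitoneOn_of_hasDerivWithinAt_nonpos (convex_Icc a b)
      (fun t ht ↦ (hφ t ht).continuousWithinAt)
      (fun t ht ↦ (hφ t (interior_subset ht)).mono interior_subset)
      (fun t ht ↦ hφ'_nonpos t (interior_subset ht))
  have hφa : φ a = 0 := by simp [φ, hxa]
  have hφb : 0 ≤ φ b := by
    simpa only [φ, hyb] using mul_nonneg (hw b hb).le (hquad hGpos _)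
  have hφ0 : ∀ t ∈ Icc a b, φ t = 0 := fun t ht ↦
    le_antisymm (hφa ▸ hanti ha ht ht.1) (hφb.trans (hanti ht hb ht.2))
  have hKy : ∀ t ∈ Icc a b, K t *ᵥ y t = 0 := fun t ht ↦ by
    have hzero : φ' t = 0 := (uniqueDiffOn_Icc hab t ht).eq_deriv _ (hφ t ht)
      ((hasDerivWithinAt_const t _ (0 : ℝ)).congr_of_mem hφ0 ht)
    have hsum := (mul_eq_zero.1 (neg_eq_zero.1 hzero)).resolve_left (hw t ht).ne'
    have hquadK : y t ⬝ᵥ K t *ᵥ y t = 0 := by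
      linarith [hquad (hKpos t ht) (y t), hquad (hHpos t ht) (x t)]
    exact ((hKpos t ht).dotProduct_mulVec_zero_iff _).1 (by simpa using hquadK)
  have hx0 : ∀ t ∈ Icc a b, x t = 0 :=
    eqOn_zero_of_linear_of_left (L := fun t ↦ (P t).mulVecLin.toContinuousLinearMap)
      (fun z ↦ hP.matrix_mulVec continuousOn_const)
      (fun t ht ↦ by simpa [hKy t ht] using hx t ht) hxa
  have hy0 : ∀ t ∈ Icc a b, y t = 0 :=
    eqOn_zero_of_linear_of_right (L := fun t ↦ (-(F t)ᵀ).mulVecLin.toContinuousLinearMap)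
      (fun z ↦ (continuous_id.matrix_transpose.comp_continuousOn hF).neg.matrix_mulVec
        continuousOn_const)
      (fun t ht ↦ by
        have h := hy t ht
        rw [hx0 t ht, mulVec_zero, add_zero, ← neg_mulVec] at h
        exact h) (by simp [hyb, hx0 b hb])
  exact fun t ht ↦ ⟨hx0 t ht, hy0 t ht⟩

/-- Uniqueness for the linear two-point boundary value problem implies existence. -/
theorem exists_coupled_of_eqOn_zero (hab : a < b) {P F K H : ℝ → Matrix n n ℝ} {G : Matrix n n ℝ}
    (hP : ContinuousOn P (Icc a b)) (hF : ContinuousOn F (Icc a b))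
    (hK : ContinuousOn K (Icc a b)) (hH : ContinuousOn H (Icc a b))
    (hzero : ∀ x y : ℝ → n → ℝ,
      (∀ t ∈ Icc a b, HasDerivWithinAt x (P t *ᵥ x t - K t *ᵥ y t) (Icc a b) t) →
      (∀ t ∈ Icc a b, HasDerivWithinAt y (-((F t)ᵀ *ᵥ y t + H t *ᵥ x t)) (Icc a b) t) →
      x a = 0 → y b = G *ᵥ x b → ∀ t ∈ Icc a b, x t = 0 ∧ y t = 0) (x₀ : n → ℝ) :
    ∃ x y : ℝ → n → ℝ,
      (∀ t ∈ Icc a b, HasDerivWithinAt x (P t *ᵥ x t - K t *ᵥ y t) (Icc a b) t) ∧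
      (∀ t ∈ Icc a b, HasDerivWithinAt y (-((F t)ᵀ *ᵥ y t + H t *ᵥ x t)) (Icc a b) t) ∧
      x a = x₀ ∧ y b = G *ᵥ x b := by
  obtain ⟨Φ, hΦ⟩ := exists_linear_flow (L := fun t ↦ coupledField (P t) (F t) (K t) (H t)) hab.le
    (continuousOn_coupledField hP hF hK hH)
  have hcomp : ∀ z₀, ∃ x y : ℝ → n → ℝ,
      (∀ t ∈ Icc a b, HasDerivWithinAt x (P t *ᵥ x t - K t *ᵥ y t) (Icc a b) t) ∧
      (∀ t ∈ Icc a b, HasDerivWithinAt y (-((F t)ᵀ *ᵥ y t + H t *ᵥ x t)) (Icc a b) t) ∧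
      (x a, y a) = z₀ ∧ (x b, y b) = Φ z₀ := fun z₀ ↦ by
    obtain ⟨z, hza, hzb, hz⟩ := hΦ z₀
    exact ⟨fun t ↦ (z t).1, fun t ↦ (z t).2,
      fun t ht ↦ (hasFDerivAt_fst (𝕜 := ℝ) (p := z t)).comp_hasDerivWithinAt t (hz t ht),
      fun t ht ↦ (hasFDerivAt_snd (𝕜 := ℝ) (p := z t)).comp_hasDerivWithinAt t (hz t ht),
      hza, hzb⟩
  let Ψ : ((n → ℝ) × (n → ℝ)) →ₗ[ℝ] ((n → ℝ) × (n → ℝ)) :=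
    (LinearMap.fst ℝ _ _).prod
      ((LinearMap.snd ℝ _ _ - G.mulVecLin ∘ₗ LinearMap.fst ℝ _ _) ∘ₗ Φ)
  have hinj : Function.Injective Ψ := (injective_iff_map_eq_zero Ψ).2 fun z₀ h ↦ by
    obtain ⟨x, y, hx, hy, hza, hzb⟩ := hcomp z₀
    have h₁ : z₀.1 = 0 := congrArg Prod.fst h
    have h₂ : (Φ z₀).2 - G *ᵥ (Φ z₀).1 = 0 := congrArg Prod.snd h
    rw [← hza] at h₁
    rw [← hzb] at h₂
    obtain ⟨hxa, hya⟩ := hzero x y hx hy h₁ (sub_eq_zero.1 h₂) a (left_mem_Icc.2 hab.le)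
    rw [← hza, hxa, hya, Prod.mk_zero_zero]
  obtain ⟨z₀, h⟩ := LinearMap.injective_iff_surjective.1 hinj (x₀, 0)
  obtain ⟨x, y, hx, hy, hza, hzb⟩ := hcomp z₀
  have h₁ : z₀.1 = x₀ := congrArg Prod.fst h
  have h₂ : (Φ z₀).2 - G *ᵥ (Φ z₀).1 = 0 := congrArg Prod.snd h
  rw [← hza] at h₁
  rw [← hzb] at h₂
  exact ⟨x, y, hx, hy, h₁, sub_eq_zero.1 h₂⟩

/-- A linear matrix flow that stays scalar has a scalar generator, and the inverse of the scalar
flow integrates it. -/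
theorem exists_scalar_generator [DecidableEq n] (hab : a < b) {D e : ℝ → Matrix n n ℝ}
    {lam : ℝ → ℝ}
    (he : ∀ t ∈ Icc a b, HasDerivWithinAt e ((D t)ᵀ * e t) (Icc a b) t)
    (hscalar : ∀ t ∈ Icc a b, e t = lam t • (1 : Matrix n n ℝ) ∧ 0 < lam t) :
    ∃ c w : ℝ → ℝ, (∀ t ∈ Icc a b, D t = c t • 1) ∧ (∀ t ∈ Icc a b, 0 < w t) ∧
      ∀ t ∈ Icc a b, HasDerivWithinAt w (-(c t * w t)) (Icc a b) t := by
  rcases isEmpty_or_nonempty n with hn | ⟨⟨k⟩⟩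
  · exact ⟨fun _ ↦ 0, fun _ ↦ 1, fun t _ ↦ Subsingleton.elim _ _, fun t _ ↦ one_pos, fun t _ ↦ by
      simpa using hasDerivWithinAt_const t (Icc a b) (1 : ℝ)⟩
  have hentry : ∀ i j, ∀ t ∈ Icc a b,
      HasDerivWithinAt (fun τ ↦ e τ i j) (D t j i * lam t) (Icc a b) t := fun i j t ht ↦ by
    have := hasDerivWithinAt_pi.1 (hasDerivWithinAt_pi.1 (he t ht) i) j
    rwa [(hscalar t ht).1, mul_smul_one, Matrix.smul_apply, transpose_apply, smul_eq_mul,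
      mul_comm] at this
  have hval : ∀ i j, ∀ t ∈ Icc a b, e t i j = lam t * (1 : Matrix n n ℝ) i j :=
    fun i j t ht ↦ by rw [(hscalar t ht).1]; simp
  refine ⟨fun t ↦ D t k k, fun t ↦ (e t k k)⁻¹, fun t ht ↦ ?_, fun t ht ↦ ?_, fun t ht ↦ ?_⟩
  · ext j i
    have heq := (uniqueDiffOn_Icc hab t ht).eq_deriv _ (hentry i j t ht)
      (((hentry k k t ht).mul_const ((1 : Matrix n n ℝ) i j)).congr_of_mem
        (fun s hs ↦ by simp [hval _ _ s hs]) ht)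
    have hlam := (hscalar t ht).2.ne'
    have : D t j i = D t k k * (1 : Matrix n n ℝ) i j :=
      mul_right_cancel₀ hlam (by rw [heq]; ring)
    simp [this, one_apply, eq_comm]
  · simpa [hval k k t ht] using (hscalar t ht).2
  · have hne : e t k k ≠ 0 := by simpa [hval k k t ht] using (hscalar t ht).2.ne'
    convert! (hentry k k t ht).fun_inv hne using 1
    rw [show lam t = e t k k by simp [hval k k t ht]]
    field_simp

lemma posDef_of_sub_smul_one_posSemidef [DecidableEq m] {M : Matrix m m ℝ} {r : ℝ} (hr : 0 < r)
    (hM : (M - r • (1 : Matrix m m ℝ)).PosSemidef) : M.PosDef := by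
  simpa using PosDef.posSemidef_add hM (PosDef.one.smul hr)

lemma ContinuousOn.matrix_inv_of_posDef [DecidableEq n] {M : ℝ → Matrix n n ℝ} {s : Set ℝ}
    (hM : ContinuousOn M s) (hpos : ∀ t ∈ s, (M t).PosDef) :
    ContinuousOn (fun t ↦ (M t)⁻¹) s := fun t ht ↦
  (continuousAt_matrix_inv (M t) (by
    rw [Ring.inverse_eq_inv']
    exact continuousAt_inv₀ (hpos t ht).det_pos.ne')).comp_continuousWithinAt (hM t ht)

end TwoPoint

/-- under the scalar-flow condition `e_t = λ_t·Id` for the solution of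
`de/dt = (C+Γ)ᵀe`, `e₀ = Id`, the smooth forward–backward system characterizing the
mean-field-game equilibrium mean flow has exactly one pair of continuous solutions on
`[0,T]`, for every initial condition `x₀`. -/
theorem smooth_fb_system_existence_uniqueness
    (T : ℝ) (hT : 0 < T) (d κ : ℕ)
    (A C : ℝ → Mat d) (B : ℝ → Matrix (Fin d) (Fin κ) ℝ)
    (R : ℝ → Matrix (Fin κ) (Fin κ) ℝ) (Qt Qbt St : ℝ → Mat d)
    (Q Qb S : Mat d) (lam0 : ℝ) (hlam0 : 0 < lam0)
    (hA : ContinuousOn A (Icc (0:ℝ) T)) (hC : ContinuousOn C (Icc (0:ℝ) T))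
    (hB : ContinuousOn B (Icc (0:ℝ) T)) (hR : ContinuousOn R (Icc (0:ℝ) T))
    (hQt : ContinuousOn Qt (Icc (0:ℝ) T)) (hQbt : ContinuousOn Qbt (Icc (0:ℝ) T))
    (hSt : ContinuousOn St (Icc (0:ℝ) T))
    (hRpos : ∀ t ∈ Icc (0:ℝ) T, (R t - lam0 • (1 : Matrix (Fin κ) (Fin κ) ℝ)).PosSemidef)
    (hQtpos : ∀ t ∈ Icc (0:ℝ) T, (Qt t).PosSemidef)
    (hQbtpos : ∀ t ∈ Icc (0:ℝ) T, (Qbt t).PosSemidef)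
    (hQpos : Q.PosSemidef) (hQbpos : Qb.PosSemidef)
    -- smooth common-noise coefficients:
    (N Γ : ℝ → Mat d)
    (hN : ContinuousOn N (Icc (0:ℝ) T)) (hΓ : ContinuousOn Γ (Icc (0:ℝ) T))
    -- positivity of the effective running and terminal costs:
    (hQS : ∀ t ∈ Icc (0:ℝ) T, (Qt t + Qbt t - Qbt t * St t).PosSemidef)
    (hQST : (Q + Qb - Qb * S).PosSemidef)
    -- the solution of `de/dt = (C+Γ)ᵀe`, `e₀ = Id`, assumed scalar:
    (e : ℝ → Mat d) (lam : ℝ → ℝ)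
    (he : ∀ t ∈ Icc (0:ℝ) T,
      HasDerivWithinAt e ((C t + Γ t)ᵀ * e t) (Icc (0:ℝ) T) t)
    (he0 : e 0 = 1)
    (hescalar : ∀ t ∈ Icc (0:ℝ) T, e t = lam t • (1 : Mat d) ∧ 0 < lam t)
    (x₀ : Vec d) :
    ∃ xb yb : ℝ → Vec d,
      (ContinuousOn xb (Icc (0:ℝ) T) ∧ ContinuousOn yb (Icc (0:ℝ) T) ∧
        (∀ t ∈ Icc (0:ℝ) T,
          xb t = x₀ + ∫ s in (0:ℝ)..t,
            ((N s + Γ s + A s + C s) *ᵥ xb s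
              - B s *ᵥ ((R s)⁻¹ *ᵥ ((B s)ᵀ *ᵥ yb s)))) ∧
        (∀ t ∈ Icc (0:ℝ) T,
          yb t = (Q + Qb - Qb * S) *ᵥ xb T
            + ∫ s in t..T,
                ((N s)ᵀ *ᵥ yb s + (Qt s + Qbt s - Qbt s * St s) *ᵥ xb s
                  + (A s)ᵀ *ᵥ yb s))) ∧
      ∀ xb₂ yb₂ : ℝ → Vec d,
        (ContinuousOn xb₂ (Icc (0:ℝ) T) ∧ ContinuousOn yb₂ (Icc (0:ℝ) T) ∧
          (∀ t ∈ Icc (0:ℝ) T,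
            xb₂ t = x₀ + ∫ s in (0:ℝ)..t,
              ((N s + Γ s + A s + C s) *ᵥ xb₂ s
                - B s *ᵥ ((R s)⁻¹ *ᵥ ((B s)ᵀ *ᵥ yb₂ s)))) ∧
          (∀ t ∈ Icc (0:ℝ) T,
            yb₂ t = (Q + Qb - Qb * S) *ᵥ xb₂ T
              + ∫ s in t..T,
                  ((N s)ᵀ *ᵥ yb₂ s + (Qt s + Qbt s - Qbt s * St s) *ᵥ xb₂ s
                    + (A s)ᵀ *ᵥ yb₂ s))) →
        ∀ t ∈ Icc (0:ℝ) T, xb₂ t = xb t ∧ yb₂ t = yb t := by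
  have h0T : (0 : ℝ) ∈ Icc (0 : ℝ) T := left_mem_Icc.2 hT.le
  have hTT : T ∈ Icc (0 : ℝ) T := right_mem_Icc.2 hT.le
  obtain ⟨c, w, hc, hw, hw'⟩ := exists_scalar_generator hT he hescalar
  let P : ℝ → Mat d := fun t ↦ N t + Γ t + A t + C t
  let F : ℝ → Mat d := fun t ↦ N t + A t
  let K : ℝ → Mat d := fun t ↦ B t * (R t)⁻¹ * (B t)ᵀ
  let H : ℝ → Mat d := fun t ↦ Qt t + Qbt t - Qbt t * St t
  let G : Mat d := Q + Qb - Qb * S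
  have hRdef : ∀ t ∈ Icc (0 : ℝ) T, (R t).PosDef := fun t ht ↦
    posDef_of_sub_smul_one_posSemidef hlam0 (hRpos t ht)
  have hmul : ∀ {l m n : ℕ} {X : ℝ → Matrix (Fin l) (Fin m) ℝ} {Y : ℝ → Matrix (Fin m) (Fin n) ℝ},
      ContinuousOn X (Icc 0 T) → ContinuousOn Y (Icc 0 T) →
        ContinuousOn (fun t ↦ X t * Y t) (Icc 0 T) := fun hX hY ↦
    (continuous_fst.matrix_mul continuous_snd).comp_continuousOn (hX.prodMk hY)
  have hP : ContinuousOn P (Icc 0 T) := ((hN.add hΓ).add hA).add hC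
  have hF : ContinuousOn F (Icc 0 T) := hN.add hA
  have hK : ContinuousOn K (Icc 0 T) :=
    hmul (hmul hB (hR.matrix_inv_of_posDef hRdef))
      (continuous_id.matrix_transpose.comp_continuousOn hB)
  have hH : ContinuousOn H (Icc 0 T) := (hQt.add hQbt).sub (hmul hQbt hSt)
  have hKpos : ∀ t ∈ Icc (0 : ℝ) T, (K t).PosSemidef := fun t ht ↦ by
    simpa [K] using (hRdef t ht).posSemidef.inv.mul_mul_conjTranspose_same (B t)
  have hPF : ∀ t ∈ Icc (0 : ℝ) T, P t = F t + c t • 1 := fun t ht ↦ by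
    rw [← hc t ht]
    simp only [P, F]
    abel
  have hzero : ∀ x y : ℝ → Vec d,
      (∀ t ∈ Icc 0 T, HasDerivWithinAt x (P t *ᵥ x t - K t *ᵥ y t) (Icc 0 T) t) →
      (∀ t ∈ Icc 0 T, HasDerivWithinAt y (-((F t)ᵀ *ᵥ y t + H t *ᵥ x t)) (Icc 0 T) t) →
      x 0 = 0 → y T = G *ᵥ x T → ∀ t ∈ Icc 0 T, x t = 0 ∧ y t = 0 := fun x y ↦
    coupled_eqOn_zero hT hP hF hKpos hQS hQST hPF hw hw'
  have hforward : ∀ x y : ℝ → Vec d, (fun s ↦ (N s + Γ s + A s + C s) *ᵥ x s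
      - B s *ᵥ ((R s)⁻¹ *ᵥ ((B s)ᵀ *ᵥ y s))) = fun s ↦ P s *ᵥ x s - K s *ᵥ y s := fun x y ↦ by
    simp only [P, K, mulVec_mulVec, Matrix.mul_assoc]
  have hbackward : ∀ (x y : ℝ → Vec d) (t : ℝ), ∫ s in t..T, ((N s)ᵀ *ᵥ y s
      + (Qt s + Qbt s - Qbt s * St s) *ᵥ x s + (A s)ᵀ *ᵥ y s)
      = ∫ s in T..t, -((F s)ᵀ *ᵥ y s + H s *ᵥ x s) := fun x y t ↦ by
    rw [intervalIntegral.integral_neg, ← intervalIntegral.integral_symm]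
    refine intervalIntegral.integral_congr fun s _ ↦ ?_
    simp only [F, H, transpose_add, add_mulVec]
    abel
  have hiff : ∀ x y : ℝ → Vec d, ContinuousOn x (Icc 0 T) → ContinuousOn y (Icc 0 T) →
      (((∀ t ∈ Icc (0 : ℝ) T, x t = x₀ + ∫ s in (0 : ℝ)..t, ((N s + Γ s + A s + C s) *ᵥ x s
          - B s *ᵥ ((R s)⁻¹ *ᵥ ((B s)ᵀ *ᵥ y s)))) ∧
        (∀ t ∈ Icc (0 : ℝ) T, y t = (Q + Qb - Qb * S) *ᵥ x T + ∫ s in t..T, ((N s)ᵀ *ᵥ y s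
          + (Qt s + Qbt s - Qbt s * St s) *ᵥ x s + (A s)ᵀ *ᵥ y s))) ↔
      ((x 0 = x₀ ∧ ∀ t ∈ Icc 0 T, HasDerivWithinAt x (P t *ᵥ x t - K t *ᵥ y t) (Icc 0 T) t) ∧
        (y T = G *ᵥ x T ∧
          ∀ t ∈ Icc 0 T, HasDerivWithinAt y (-((F t)ᵀ *ᵥ y t + H t *ᵥ x t)) (Icc 0 T) t))) :=
    fun x y hx hy ↦ by
      have hFt : ContinuousOn (fun t ↦ (F t)ᵀ) (Icc 0 T) :=
        continuous_id.matrix_transpose.comp_continuousOn hF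
      rw [hforward x y]
      simp only [hbackward x y]
      exact and_congr
        (forall_eq_add_integral_iff ((hP.matrix_mulVec hx).sub (hK.matrix_mulVec hy)) h0T _)
        (forall_eq_add_integral_iff ((hFt.matrix_mulVec hy).add (hH.matrix_mulVec hx)).neg hTT _)
  obtain ⟨x, y, hx, hy, hx0, hyT⟩ := exists_coupled_of_eqOn_zero hT hP hF hK hH hzero x₀
  have hxc : ContinuousOn x (Icc 0 T) := fun t ht ↦ (hx t ht).continuousWithinAt
  have hyc : ContinuousOn y (Icc 0 T) := fun t ht ↦ (hy t ht).continuousWithinAt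
  refine ⟨x, y, ⟨hxc, hyc, (hiff x y hxc hyc).2 ⟨⟨hx0, hx⟩, hyT, hy⟩⟩, ?_⟩
  rintro x₂ y₂ ⟨hx₂c, hy₂c, h₂⟩ t ht
  obtain ⟨⟨hx₂0, hx₂⟩, hy₂T, hy₂⟩ := (hiff x₂ y₂ hx₂c hy₂c).1 h₂
  have hdiff := hzero (fun s ↦ x₂ s - x s) (fun s ↦ y₂ s - y s)
    (fun s hs ↦ by
      convert! (hx₂ s hs).fun_sub (hx s hs) using 1
      simp only [mulVec_sub]
      abel)
    (fun s hs ↦ by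
      convert! (hy₂ s hs).fun_sub (hy s hs) using 1
      simp only [mulVec_sub]
      abel)
    (by simp [hx₂0, hx0]) (by simp [hy₂T, hyT, mulVec_sub]) t ht
  exact ⟨sub_eq_zero.1 hdiff.1, sub_eq_zero.1 hdiff.2⟩
end
end

section
/- In the controlled-path setting below, there exists a constant c ≥ 0, depending only on T, β and β', with the following property. Suppose Z, Z', z, z' are as in the context with all the seminorms ‖δZ‖_β, ‖δZ'‖_{β'}, ‖R^Z‖_{β+β'}, ‖δz‖_β, ‖δz'‖_{β'}, ‖R^z‖_{β+β'} finite, and K, K₀ ≥ 0 satisfy sup_{t∈[0,T]}|Z_t| ≤ K, |Z_0| + ‖δZ‖_β + |Z'_0| + ‖δZ'‖_{β'} + ‖R^Z‖_{β+β'} ≤ K, and |z_0| ≤ K₀, |z'_0| ≤ K₀. Then: (a) ‖δ(Zz)‖_β ≤ cK(‖δz‖_β + K₀); (b) ‖δ((Zz)')‖_{β'} ≤ cK(‖δz‖_β + ‖δz'‖_{β'} + K₀); (c) ‖R^{Zz}‖_β ≤ cK(‖δz‖_β + ‖δz'‖_{β'} + K₀)(1 + ‖δη‖_β); (d) ‖R^{Zz}‖_{β+β'}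 ≤ cK(‖δz‖_β + ‖R^z‖_{β+β'} + K₀). -/
open MeasureTheory Matrix Set

noncomputable section

attribute [local instance] Matrix.normedAddCommGroup Matrix.normedSpace

/-- Increment of a one-parameter path: `δf s t = f t − f s`. -/
def delta {E : Type*} [AddCommGroup E] (f : ℝ → E) : ℝ → ℝ → E := fun s t => f t - f s

/-- Remainder of a controlled path `(f, f')` with respect to the driver `η`:
`R^f_{s,t} = δf_{s,t} − f'_s (δη_{s,t})`, where the Gubinelli derivative `f'` is recorded
componentwise (`f' t i` is the value of `f'_t` on the `i`-th coordinate direction of `ℝ^p`). -/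
def ctrlRem {p : ℕ} {E : Type*} [AddCommGroup E] [Module ℝ E]
    (η : ℝ → Vec p) (f : ℝ → E) (f' : ℝ → Fin p → E) : ℝ → ℝ → E :=
  fun s t => f t - f s - ∑ i, (η t i - η s i) • f' s i

/-- The `γ`-Hölder seminorm of a two-parameter function over `0 ≤ s < t ≤ T`
(as a supremum in `ℝ`). -/
def holderSN (T γ : ℝ) {E : Type*} [NormedAddCommGroup E] (F : ℝ → ℝ → E) : ℝ :=
  ⨆ q : {q : ℝ × ℝ // 0 ≤ q.1 ∧ q.1 < q.2 ∧ q.2 ≤ T},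
    ‖F q.1.1 q.1.2‖ / (q.1.2 - q.1.1) ^ γ

/-- Finiteness of the `γ`-Hölder seminorm. -/
def holderFin (T γ : ℝ) {E : Type*} [NormedAddCommGroup E] (F : ℝ → ℝ → E) : Prop :=
  BddAbove (Set.range fun q : {q : ℝ × ℝ // 0 ≤ q.1 ∧ q.1 < q.2 ∧ q.2 ≤ T} =>
    ‖F q.1.1 q.1.2‖ / (q.1.2 - q.1.1) ^ γ)

lemma norm_mulVec_le_of_le {d : ℕ} {A : Mat d} {v : Vec d} {a b : ℝ}
    (hA : ‖A‖ ≤ a) (hv : ‖v‖ ≤ b) : ‖A *ᵥ v‖ ≤ d * (a * b) := by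
  have ha : 0 ≤ a := (norm_nonneg _).trans hA
  have hb : 0 ≤ b := (norm_nonneg _).trans hv
  refine (pi_norm_le_iff_of_nonneg (by positivity)).2 fun i => ?_
  calc ‖(A *ᵥ v) i‖ ≤ ∑ j, ‖A i j * v j‖ := norm_sum_le Finset.univ fun j => A i j * v j
    _ ≤ ∑ _j : Fin d, a * b := by
        refine Finset.sum_le_sum fun j _ => ?_
        rw [norm_mul]
        exact mul_le_mul ((norm_entry_le_entrywise_sup_norm A).trans hA)
          ((norm_le_pi_norm v j).trans hv) (norm_nonneg _) ha
    _ = d * (a * b) := by simp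

lemma norm_sum_smul_le_of_le {p : ℕ} {E : Type*} [SeminormedAddCommGroup E] [NormedSpace ℝ E]
    {x : Vec p} {g : Fin p → E} {a b : ℝ} (hx : ‖x‖ ≤ a) (hg : ∀ i, ‖g i‖ ≤ b) :
    ‖∑ i, x i • g i‖ ≤ p * (a * b) := by
  have ha : 0 ≤ a := (norm_nonneg _).trans hx
  calc ‖∑ i, x i • g i‖ ≤ ∑ i, ‖x i • g i‖ := norm_sum_le _ _
    _ ≤ ∑ _i : Fin p, a * b := by
        refine Finset.sum_le_sum fun i _ => ?_
        rw [norm_smul]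
        exact mul_le_mul ((norm_le_pi_norm x i).trans hx) (hg i) (norm_nonneg _) ha
    _ = p * (a * b) := by simp

section Holder

variable {E : Type*} [NormedAddCommGroup E] {T γ : ℝ} {F : ℝ → ℝ → E}

lemma holderSN_nonneg : 0 ≤ holderSN T γ F := by
  refine Real.iSup_nonneg fun q => div_nonneg (norm_nonneg _) (Real.rpow_nonneg ?_ _)
  linarith [q.2.2.1]

lemma holderFin.norm_le (h : holderFin T γ F) {s t : ℝ} (hs : 0 ≤ s) (hst : s < t) (ht : t ≤ T) :
    ‖F s t‖ ≤ holderSN T γ F * (t - s) ^ γ :=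
  (div_le_iff₀ (Real.rpow_pos_of_pos (sub_pos.2 hst) _)).1 (le_ciSup h ⟨(s, t), hs, hst, ht⟩)

lemma holderSN_le {C : ℝ} (hT : 0 < T)
    (h : ∀ s t, 0 ≤ s → s < t → t ≤ T → ‖F s t‖ ≤ C * (t - s) ^ γ) : holderSN T γ F ≤ C := by
  have : Nonempty {q : ℝ × ℝ // 0 ≤ q.1 ∧ q.1 < q.2 ∧ q.2 ≤ T} := ⟨⟨(0, T), le_rfl, hT, le_rfl⟩⟩
  exact ciSup_le fun q => (div_le_iff₀ (Real.rpow_pos_of_pos (sub_pos.2 q.2.2.1) _)).2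
    (h _ _ q.2.1 q.2.2.1 q.2.2.2)

lemma rpow_le_one_add {u : ℝ} (hu : 0 ≤ u) (huT : u ≤ T) (hγ : 0 ≤ γ) (hγ' : γ ≤ 1) :
    u ^ γ ≤ 1 + T := by
  calc u ^ γ ≤ (1 + T) ^ γ := Real.rpow_le_rpow hu (by linarith) hγ
    _ ≤ (1 + T) ^ (1 : ℝ) := Real.rpow_le_rpow_of_exponent_le (by linarith) hγ'
    _ = 1 + T := Real.rpow_one _

lemma rpow_le_one_add_mul_rpow {γ' u : ℝ} (hu : 0 < u) (huT : u ≤ T) (hγ : γ' ≤ γ)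
    (hγ' : γ ≤ γ' + 1) : u ^ γ ≤ (1 + T) * u ^ γ' := by
  rw [show γ = (γ - γ') + γ' by ring, Real.rpow_add hu]
  gcongr
  exact rpow_le_one_add hu.le huT (by linarith) (by linarith)

/-- A Hölder path is bounded by its initial value and its Hölder seminorm. -/
lemma norm_le_of_holderFin_delta {f : ℝ → E} (h : holderFin T γ (delta f)) (hγ : 0 ≤ γ)
    (hγ' : γ ≤ 1) {t : ℝ} (ht0 : 0 ≤ t) (ht : t ≤ T) :
    ‖f t‖ ≤ (1 + T) * (‖f 0‖ + holderSN T γ (delta f)) := by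
  have hN : 0 ≤ holderSN T γ (delta f) := holderSN_nonneg
  have hM : ‖f 0‖ ≤ (1 + T) * ‖f 0‖ :=
    le_mul_of_one_le_left (norm_nonneg _) (by linarith)
  rcases ht0.eq_or_lt with rfl | h0
  · nlinarith
  · have h1 := h.norm_le le_rfl h0 ht
    have h2 : (t - 0) ^ γ ≤ 1 + T :=
      rpow_le_one_add (by linarith) (by linarith) hγ hγ'
    have h3 := mul_le_mul_of_nonneg_left h2 hN
    have h4 : ‖f t‖ ≤ ‖f 0‖ + ‖delta f 0 t‖ := by
      simpa [delta] using norm_add_le (f 0) (f t - f 0)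
    linarith

end Holder

lemma delta_mulVec {d : ℕ} (Z : ℝ → Mat d) (z : ℝ → Vec d) (s t : ℝ) :
    delta (fun t => Z t *ᵥ z t) s t = delta Z s t *ᵥ z t + Z s *ᵥ delta z s t := by
  simp only [delta, Matrix.sub_mulVec, Matrix.mulVec_sub]
  abel

lemma ctrlRem_mulVec {p d : ℕ} (η : ℝ → Vec p) (Z : ℝ → Mat d) (Z' : ℝ → Fin p → Mat d)
    (z : ℝ → Vec d) (z' : ℝ → Fin p → Vec d) (s t : ℝ) :
    ctrlRem η (fun t => Z t *ᵥ z t) (fun t i => Z' t i *ᵥ z t + Z t *ᵥ z' t i) s t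
      = ctrlRem η Z Z' s t *ᵥ z s + Z s *ᵥ ctrlRem η z z' s t
        + delta Z s t *ᵥ delta z s t := by
  simp only [ctrlRem, delta, Matrix.sub_mulVec, Matrix.mulVec_sub, Matrix.sum_mulVec,
    Matrix.mulVec_sum, Matrix.smul_mulVec, Matrix.mulVec_smul, smul_add, Finset.sum_add_distrib]
  abel

set_option maxHeartbeats 1000000 in
/-- product estimates for controlled rough paths. There is a constant `c ≥ 0`
depending only on `T`, `β`, `β'` (the dimensions being fixed) such that for every driver `η`,
every matrix-valued controlled path `(Z, Z')` and vector-valued controlled path `(z, z')`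
with finite seminorms, bounded by `K` resp. `K₀` as below, the product controlled path
`(Zz, (Zz)')` with `(Zz)_t = Z_t z_t`, `(Zz)'_t v = (Z'_t v) z_t + Z_t (z'_t v)` satisfies
the four seminorm estimates (a)–(d). -/
theorem controlled_path_product_estimates
    (T : ℝ) (hT : 0 < T) (p d : ℕ) (β β' : ℝ)
    (hβ' : 0 < β') (hβ'β : β' ≤ β) (hβ : β ≤ 1) :
    ∃ c : ℝ, 0 ≤ c ∧
      ∀ (η : ℝ → Vec p) (Z : ℝ → Mat d) (Z' : ℝ → Fin p → Mat d)
        (z : ℝ → Vec d) (z' : ℝ → Fin p → Vec d) (K K₀ : ℝ),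
        0 ≤ K → 0 ≤ K₀ →
        holderFin T β (delta η) →
        holderFin T β (delta Z) → holderFin T β' (delta Z') →
        holderFin T (β + β') (ctrlRem η Z Z') →
        holderFin T β (delta z) → holderFin T β' (delta z') →
        holderFin T (β + β') (ctrlRem η z z') →
        (∀ t ∈ Icc (0:ℝ) T, ‖Z t‖ ≤ K) →
        ‖Z 0‖ + holderSN T β (delta Z) + ‖Z' 0‖ + holderSN T β' (delta Z')
            + holderSN T (β + β') (ctrlRem η Z Z') ≤ K →
        ‖z 0‖ ≤ K₀ → ‖z' 0‖ ≤ K₀ →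
        -- (a)
        (holderSN T β (delta (fun t => Z t *ᵥ z t))
            ≤ c * K * (holderSN T β (delta z) + K₀)) ∧
        -- (b)
        (holderSN T β' (delta (fun t i => Z' t i *ᵥ z t + Z t *ᵥ z' t i))
            ≤ c * K * (holderSN T β (delta z) + holderSN T β' (delta z') + K₀)) ∧
        -- (c)
        (holderSN T β
              (ctrlRem η (fun t => Z t *ᵥ z t) (fun t i => Z' t i *ᵥ z t + Z t *ᵥ z' t i))
            ≤ c * K * (holderSN T β (delta z) + holderSN T β' (delta z') + K₀)
                * (1 + holderSN T β (delta η))) ∧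
        -- (d)
        (holderSN T (β + β')
              (ctrlRem η (fun t => Z t *ᵥ z t) (fun t i => Z' t i *ᵥ z t + Z t *ᵥ z' t i))
            ≤ c * K * (holderSN T β (delta z) + holderSN T (β + β') (ctrlRem η z z') + K₀)) := by
  set M : ℝ := 1 + T with hMdef
  have hM : 1 ≤ M := by linarith
  have hβ0 : 0 < β := hβ'.trans_le hβ'β
  refine ⟨4 * (p + 1) * d * M ^ 2, by positivity, ?_⟩
  intro η Z Z' z z' K K₀ hK hK₀ hη hZ hZ' hRZ hz hz' hRz hZK hsum hz0 hz'0
  set A := holderSN T β (delta z) with hAdef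
  set B := holderSN T β' (delta z') with hBdef
  set R := holderSN T (β + β') (ctrlRem η z z') with hRdef
  set H := holderSN T β (delta η) with hHdef
  have hA : 0 ≤ A := holderSN_nonneg
  have hB : 0 ≤ B := holderSN_nonneg
  have hR : 0 ≤ R := holderSN_nonneg
  have hH : 0 ≤ H := holderSN_nonneg
  have hNZ : 0 ≤ holderSN T β (delta Z) := holderSN_nonneg
  have hNZ' : 0 ≤ holderSN T β' (delta Z') := holderSN_nonneg
  have hNRZ : 0 ≤ holderSN T (β + β') (ctrlRem η Z Z') := holderSN_nonneg
  have hZ0 := norm_nonneg (Z 0)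
  have hZ'0 := norm_nonneg (Z' 0)
  have z_le : ∀ t, 0 ≤ t → t ≤ T → ‖z t‖ ≤ M * (A + K₀) := fun t h0 h1 =>
    (norm_le_of_holderFin_delta hz hβ0.le hβ h0 h1).trans
      (mul_le_mul_of_nonneg_left (by linarith) (by linarith))
  have z'_le : ∀ t, 0 ≤ t → t ≤ T → ‖z' t‖ ≤ M * (B + K₀) := fun t h0 h1 =>
    (norm_le_of_holderFin_delta hz' hβ'.le (hβ'β.trans hβ) h0 h1).trans
      (mul_le_mul_of_nonneg_left (by linarith) (by linarith))
  have Z'_le : ∀ t, 0 ≤ t → t ≤ T → ‖Z' t‖ ≤ M * K := fun t h0 h1 =>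
    (norm_le_of_holderFin_delta hZ' hβ'.le (hβ'β.trans hβ) h0 h1).trans
      (mul_le_mul_of_nonneg_left (by linarith) (by linarith))
  have δZ_le : ∀ s t, 0 ≤ s → s < t → t ≤ T → ‖delta Z s t‖ ≤ K * (t - s) ^ β :=
    fun s t hs hst ht => (hZ.norm_le hs hst ht).trans
      (mul_le_mul_of_nonneg_right (by linarith) (Real.rpow_nonneg (by linarith) _))
  have δZ'_le : ∀ s t, 0 ≤ s → s < t → t ≤ T → ‖delta Z' s t‖ ≤ K * (t - s) ^ β' :=
    fun s t hs hst ht => (hZ'.norm_le hs hst ht).trans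
      (mul_le_mul_of_nonneg_right (by linarith) (Real.rpow_nonneg (by linarith) _))
  have RZ_le : ∀ s t, 0 ≤ s → s < t → t ≤ T →
      ‖ctrlRem η Z Z' s t‖ ≤ K * (t - s) ^ (β + β') :=
    fun s t hs hst ht => (hRZ.norm_le hs hst ht).trans
      (mul_le_mul_of_nonneg_right (by linarith) (Real.rpow_nonneg (by linarith) _))
  have δZz_le : ∀ s t, 0 ≤ s → s < t → t ≤ T → ‖delta (fun t => Z t *ᵥ z t) s t‖
      ≤ 2 * d * M * K * (A + K₀) * (t - s) ^ β := by
    intro s t hs hst ht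
    have hu : 0 ≤ (t - s) ^ β := Real.rpow_nonneg (by linarith) _
    have h1 := norm_mulVec_le_of_le (δZ_le s t hs hst ht) (z_le t (by linarith) ht)
    have h2 := norm_mulVec_le_of_le (hZK s ⟨hs, by linarith⟩) (hz.norm_le hs hst ht)
    rw [delta_mulVec]
    refine (norm_add_le_of_le h1 h2).trans ?_
    rw [← hAdef]
    calc (d : ℝ) * (K * (t - s) ^ β * (M * (A + K₀))) + d * (K * (A * (t - s) ^ β))
        ≤ d * (K * (t - s) ^ β * (M * (A + K₀))) + d * (K * (M * (A + K₀) * (t - s) ^ β)) := by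
          gcongr; nlinarith
      _ = _ := by ring
  have hMM : M ≤ M ^ 2 := by nlinarith
  have hp : (1 : ℝ) ≤ p + 1 := by linarith [(Nat.cast_nonneg p : (0 : ℝ) ≤ p)]
  refine ⟨holderSN_le hT fun s t hs hst ht => ?_, holderSN_le hT fun s t hs hst ht => ?_,
    holderSN_le hT fun s t hs hst ht => ?_, holderSN_le hT fun s t hs hst ht => ?_⟩
  all_goals have hu : 0 < t - s := sub_pos.2 hst
  all_goals have huT : t - s ≤ T := by linarith
  all_goals have huβ : 0 ≤ (t - s) ^ β := Real.rpow_nonneg hu.le _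
  · refine (δZz_le s t hs hst ht).trans ?_
    have : 2 * M ≤ 4 * (p + 1) * M ^ 2 := by nlinarith
    calc 2 * d * M * K * (A + K₀) * (t - s) ^ β = (2 * M) * (d * K * (A + K₀) * (t - s) ^ β) := by
          ring
      _ ≤ (4 * (p + 1) * M ^ 2) * (d * K * (A + K₀) * (t - s) ^ β) := by gcongr
      _ = _ := by ring
  · set w := (t - s) ^ β' with hw
    have hw0 : 0 ≤ w := Real.rpow_nonneg hu.le _
    have huw : (t - s) ^ β ≤ M * w := rpow_le_one_add_mul_rpow hu huT hβ'β (by linarith)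
    refine (pi_norm_le_iff_of_nonneg (by positivity)).2 fun i => ?_
    have e : delta (fun t i => Z' t i *ᵥ z t + Z t *ᵥ z' t i) s t i
        = delta Z' s t i *ᵥ z t + Z' s i *ᵥ delta z s t
          + delta Z s t *ᵥ z' t i + Z s *ᵥ delta z' s t i := by
      simp only [delta, Pi.sub_apply, Matrix.sub_mulVec, Matrix.mulVec_sub]
      abel
    have h1 := norm_mulVec_le_of_le ((norm_le_pi_norm _ i).trans (δZ'_le s t hs hst ht))
      (z_le t (by linarith) ht)
    have h2 := norm_mulVec_le_of_le ((norm_le_pi_norm _ i).trans (Z'_le s hs (by linarith)))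
      ((hz.norm_le hs hst ht).trans (mul_le_mul_of_nonneg_left huw hA))
    have h3 := norm_mulVec_le_of_le
      ((δZ_le s t hs hst ht).trans (mul_le_mul_of_nonneg_left huw hK))
      ((norm_le_pi_norm _ i).trans (z'_le t (by linarith) ht))
    have h4 := norm_mulVec_le_of_le (hZK s ⟨hs, by linarith⟩)
      ((norm_le_pi_norm _ i).trans (hz'.norm_le hs hst ht))
    rw [e]
    refine (norm_add_le_of_le (norm_add_le_of_le (norm_add_le_of_le h1 h2) h3) h4).trans ?_
    rw [← hBdef, ← hw]
    calc (d : ℝ) * (K * w * (M * (A + K₀))) + d * (M * K * (A * (M * w)))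
          + d * (K * (M * w) * (M * (B + K₀))) + d * (K * (B * w))
        = d * K * w * (M * (A + K₀) + M ^ 2 * A + M ^ 2 * (B + K₀) + 1 * B) := by ring
      _ ≤ d * K * w * (M ^ 2 * (A + B + K₀) + M ^ 2 * (A + B + K₀) + M ^ 2 * (A + B + K₀)
            + M ^ 2 * (A + B + K₀)) := by
          gcongr <;> linarith
      _ = 1 * (4 * d * M ^ 2 * K * (A + B + K₀) * w) := by ring
      _ ≤ (p + 1) * (4 * d * M ^ 2 * K * (A + B + K₀) * w) := by gcongr
      _ = _ := by ring
  · have hd : ∀ i, ‖Z' s i *ᵥ z s + Z s *ᵥ z' s i‖ ≤ 2 * d * M ^ 2 * K * (A + B + K₀) := by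
      intro i
      have h1 := norm_mulVec_le_of_le ((norm_le_pi_norm _ i).trans (Z'_le s hs (by linarith)))
        (z_le s hs (by linarith))
      have h2 := norm_mulVec_le_of_le (hZK s ⟨hs, by linarith⟩)
        ((norm_le_pi_norm _ i).trans (z'_le s hs (by linarith)))
      refine (norm_add_le_of_le h1 h2).trans ?_
      calc (d : ℝ) * (M * K * (M * (A + K₀))) + d * (K * (M * (B + K₀)))
          = d * K * (M ^ 2 * (A + K₀) + M * (B + K₀)) := by ring
        _ ≤ d * K * (M ^ 2 * (A + B + K₀) + M ^ 2 * (A + B + K₀)) := by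
            gcongr <;> linarith
        _ = _ := by ring
    have h1 := δZz_le s t hs hst ht
    have h2 := norm_sum_smul_le_of_le (hη.norm_le hs hst ht) hd
    refine (norm_sub_le_of_le h1 h2).trans ?_
    rw [← hHdef]
    set u := (t - s) ^ β
    calc 2 * d * M * K * (A + K₀) * u + p * (H * u * (2 * d * M ^ 2 * K * (A + B + K₀)))
        = 2 * d * K * u * (M * (A + K₀) * 1 + M ^ 2 * (A + B + K₀) * (p * H)) := by ring
      _ ≤ 2 * d * K * u * (M ^ 2 * (A + B + K₀) * ((p + 1) * (1 + H))
            + M ^ 2 * (A + B + K₀) * ((p + 1) * (1 + H))) := by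
          gcongr <;> first | linarith | nlinarith
      _ = _ := by ring
  · set w := (t - s) ^ (β + β') with hw
    have hw0 : 0 ≤ w := Real.rpow_nonneg hu.le _
    have huu : (t - s) ^ β * (t - s) ^ β ≤ M * w := by
      rw [← Real.rpow_add hu]
      exact rpow_le_one_add_mul_rpow hu huT (by linarith) (by linarith)
    have h1 := norm_mulVec_le_of_le (RZ_le s t hs hst ht) (z_le s hs (by linarith))
    have h2 := norm_mulVec_le_of_le (hZK s ⟨hs, by linarith⟩) (hRz.norm_le hs hst ht)
    have h3 := norm_mulVec_le_of_le (δZ_le s t hs hst ht) (hz.norm_le hs hst ht)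
    rw [ctrlRem_mulVec]
    refine (norm_add_le_of_le (norm_add_le_of_le h1 h2) h3).trans ?_
    rw [← hRdef, ← hAdef, ← hw]
    calc (d : ℝ) * (K * w * (M * (A + K₀))) + d * (K * (R * w))
          + d * (K * (t - s) ^ β * (A * (t - s) ^ β))
        = d * K * (w * (M * (A + K₀)) + R * w + A * ((t - s) ^ β * (t - s) ^ β)) := by ring
      _ ≤ d * K * (w * (M * (A + K₀)) + R * w + A * (M * w)) := by gcongr
      _ = d * K * w * (M * (A + K₀) + 1 * R + M * A + 0) := by ring
      _ ≤ d * K * w * (M ^ 2 * (A + R + K₀) + M ^ 2 * (A + R + K₀) + M ^ 2 * (A + R + K₀)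
            + M ^ 2 * (A + R + K₀)) := by
          gcongr <;> first | linarith | positivity
      _ = 1 * (4 * d * M ^ 2 * K * (A + R + K₀) * w) := by ring
      _ ≤ (p + 1) * (4 * d * M ^ 2 * K * (A + R + K₀) * w) := by gcongr
      _ = _ := by ring
end
end
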